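/- arXiv:0812.2111 — 2 statements merged into one kernel-verified Lean document; each statement's English description precedes it below -/
import Mathlib

section
/- Let X be a Hausdorff topological space, Y ⊆ X closed, and k ≥ 0. If every point y ∈ Y admits a neighborhood basis (U_ε) such that each pair (U_ε, U_ε \ Y) is k-connected, then the pair (X, X \ Y) is k-connected. -/
open unitInterval

noncomputable section

/-- The boundary of the cube [0,1]^ℓ. -/
def cubeBoundary (ℓ : ℕ) : Set (Fin ℓ → I) := {x | ∃ i, x i = 0 ∨ x i = 1}

/-- The pair (X, A) is k-connected: every point of X can be joined by a path to a point of A,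
and for all ℓ ≤ k, every map (Iˡ, ∂Iˡ) → (X, A) is homotopic relative to its boundary to a map
with image in A. -/
def IsConnectedPair (X : Type*) [TopologicalSpace X] (A : Set X) (k : ℕ) : Prop :=
  (∀ x : X, ∃ a ∈ A, Joined x a) ∧
  ∀ ℓ : ℕ, ℓ ≤ k → ∀ f : C(Fin ℓ → I, X), (∀ x ∈ cubeBoundary ℓ, f x ∈ A) →
    ∃ g : C(Fin ℓ → I, X), (∀ x, g x ∈ A) ∧
      Nonempty (ContinuousMap.HomotopyRel f g (cubeBoundary ℓ))

/-!
Given a map of pairs from a cube, subdivide the cube so finely that each cell meeting the preimage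
of `Y` is mapped into a small neighborhood of a point of `Y`, and push the map off `Y` by
induction on the dimension of the cells: the homotopy on the boundary of a cell is extended to its
interior by means of a collar and the `k`-connectedness of a neighborhood that controls the cell,
while the map stays fixed on cells that it sends to `X \ Y`.

The extension stays in the control set of a cell only if the homotopies on its faces do. Control
sets are therefore taken from a tower of families of neighborhoods, each uniformly refining the
previous one: the lower the dimension of a cell, the deeper in the tower its control set lies.
-/

open Set Metric Topology Uniformity

section NeighborhoodTower

variable {Q X : Type*} [UniformSpace Q] [TopologicalSpace X] {f : Q → X} {K : Set Q}
  {P : Set X → Prop}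

/-- A choice, for each point `x` of `K`, of a neighborhood `W x` of `f y` for all `y` uniformly
close to `x`. Only finitely many sets occur. -/
structure IsUniformNhdsFamily (f : Q → X) (K : Set Q) (W : Q → Set X) : Prop where
  finite_image : (W '' K).Finite
  eventually_mem : ∀ᶠ p in 𝓤 Q, p.1 ∈ K → f p.2 ∈ interior (W p.1)

theorem isUniformNhdsFamily_univ : IsUniformNhdsFamily f K fun _ => univ where
  finite_image := (finite_singleton univ).subset (by rintro _ ⟨x, -, rfl⟩; rfl)
  eventually_mem := by simp

namespace IsUniformNhdsFamily

theorem exists_refinement_at {W : Q → Set X} (hW : IsUniformNhdsFamily f K W)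
    (hP : ∀ x ∈ K, ∀ V ∈ 𝓝 (f x), ∃ U ∈ 𝓝 (f x), U ⊆ V ∧ P U) {y : Q} (hy : y ∈ K) :
    ∃ U ∈ 𝓝 (f y), P U ∧ ∀ x ∈ K, f y ∈ interior (W x) → U ⊆ W x := by
  let 𝒱 : Set (Set X) := {V ∈ W '' K | f y ∈ interior V}
  have h𝒱 : ⋂₀ 𝒱 ∈ 𝓝 (f y) :=
    (Filter.sInter_mem (hW.finite_image.subset (sep_subset _ _))).2
      fun V hV => mem_interior_iff_mem_nhds.1 hV.2
  obtain ⟨U, hU, hU𝒱, hPU⟩ := hP y hy _ h𝒱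
  exact ⟨U, hU, hPU, fun x hx hyx => hU𝒱.trans (sInter_subset_of_mem ⟨⟨x, hx, rfl⟩, hyx⟩)⟩

theorem exists_refinement {W : Q → Set X} (hW : IsUniformNhdsFamily f K W) (hf : Continuous f)
    (hK : IsCompact K) (hP : ∀ x ∈ K, ∀ V ∈ 𝓝 (f x), ∃ U ∈ 𝓝 (f x), U ⊆ V ∧ P U) :
    ∃ W' : Q → Set X, IsUniformNhdsFamily f K W' ∧ (∀ x ∈ K, P (W' x)) ∧
      ∀ᶠ p in 𝓤 Q, p.1 ∈ K → p.2 ∈ K → W' p.2 ⊆ W p.1 := by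
  choose! U hU hPU hUW using fun y hy => hW.exists_refinement_at hP (y := y) hy
  let O : Q → Set Q := fun y => {z | f z ∈ interior (U y) ∧ (z ∈ K → f y ∈ interior (W z))}
  have hO : ∀ y ∈ K, interior (O y) ∈ 𝓝 y := fun y hy =>
    interior_mem_nhds.2 <| Filter.inter_mem
      (hf.continuousAt.preimage_mem_nhds (interior_mem_nhds.2 (hU y hy)))
      (mem_nhds_right y hW.eventually_mem)
  obtain ⟨t, htK, hKt⟩ := hK.elim_nhds_subcover _ hO
  obtain ⟨V, hV, hVO⟩ := lebesgue_number_lemma hK (U := fun y : t => interior (O y))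
    (fun _ => isOpen_interior) (by rwa [iUnion_subtype])
  have hVO' : ∀ x ∈ K, ∃ c ∈ t, ∀ z, (x, z) ∈ V → z ∈ O c := fun x hx =>
    let ⟨c, hc⟩ := hVO x hx
    ⟨c, c.2, fun _ hz => interior_subset (hc hz)⟩
  choose! c hct hc using hVO'
  refine ⟨fun x => U (c x), ⟨?_, ?_⟩, fun x hx => hPU _ (htK _ (hct x hx)), ?_⟩
  · exact (t.finite_toSet.image U).subset
      (image_subset_iff.2 fun x hx => mem_image_of_mem U (hct x hx))
  · exact Filter.mem_of_superset hV fun p hp hpK => (hc p.1 hpK p.2 hp).1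
  · filter_upwards [symm_le_uniformity hV] with p hp h₁ h₂
    exact hUW _ (htK _ (hct _ h₂)) _ h₁ ((hc p.2 h₂ p.1 hp).2 h₁)

end IsUniformNhdsFamily

theorem exists_nhds_tower (hf : Continuous f) (hK : IsCompact K)
    (hP : ∀ x ∈ K, ∀ V ∈ 𝓝 (f x), ∃ U ∈ 𝓝 (f x), U ⊆ V ∧ P U) (l : ℕ) :
    ∃ W : ℕ → Q → Set X, (∀ m, ∀ x ∈ K, P (W m x)) ∧ ∀ᶠ p in 𝓤 Q, p.1 ∈ K →
      (∀ m ≤ l, f p.2 ∈ W m p.1) ∧ (p.2 ∈ K → ∀ m, ∀ n ≤ l, m < n → W n p.2 ⊆ W m p.1) := by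
  choose R hR hRP hR_sub using
    fun W (hW : IsUniformNhdsFamily f K W) => hW.exists_refinement hf hK hP
  let W : ℕ → {W // IsUniformNhdsFamily f K W} := fun n =>
    n.rec ⟨_, isUniformNhdsFamily_univ⟩ fun _ W => ⟨R W.1 W.2, hR W.1 W.2⟩
  have W_succ_sub (n : ℕ) : ∀ᶠ p in 𝓤 Q, p.1 ∈ K → p.2 ∈ K → (W (n + 1)).1 p.2 ⊆ (W n).1 p.1 :=
    hR_sub (W n).1 (W n).2
  have W_anti : ∀ x ∈ K, Antitone fun n => (W n).1 x := fun x hx =>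
    antitone_nat_of_succ_le fun n => refl_mem_uniformity (x := x) (W_succ_sub n) hx hx
  refine ⟨fun n => (W (n + 1)).1, fun n => hRP _ (W n).2, ?_⟩
  filter_upwards [(finite_Iic (l + 1)).eventually_all.2 fun n _ => (W n).2.eventually_mem,
    (finite_Iic (l + 1)).eventually_all.2 fun n _ => W_succ_sub n] with p hmem hsub h₁
  refine ⟨fun m hm => interior_subset (hmem (m + 1) (Nat.succ_le_succ hm) h₁),
    fun h₂ m n hn hmn => ?_⟩
  exact (W_anti _ h₂ (Nat.succ_le_succ hmn)).trans (hsub (m + 1) (by grind) h₁ h₂)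

end NeighborhoodTower

section Compression

variable {E X : Type*}

/-- Every map of pairs `(D, B) → (U, A)` is homotopic inside `U`, relative to `B`, to a map with
image in `A`. Maps and homotopies are total functions constrained on `D` only. -/
def IsCompressible [TopologicalSpace E] [TopologicalSpace X] (D B : Set E) (U A : Set X) : Prop :=
  ∀ f : E → X, ContinuousOn f D → MapsTo f D U → MapsTo f B A →
    ∃ Φ : E → I → X, ContinuousOn ↿Φ (D ×ˢ univ) ∧ (∀ x ∈ D, ∀ t, Φ x t ∈ U) ∧
      (∀ x ∈ D, Φ x 0 = f x) ∧ (∀ x ∈ B, ∀ t, Φ x t = f x) ∧ ∀ x ∈ D, Φ x 1 ∈ A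

variable [NormedAddCommGroup E] [NormedSpace ℝ E] {c : E} {C : Set E} {f : E → X} {h : E → I → X}
  {U A : Set X}

open AffineMap

/-- The map on the unit ball around `c` that is `f`, shrunk to the ball of radius `1 / 2`, followed
by the homotopy `h`, defined on the unit sphere, along the radii of the remaining collar. -/
def attachCollar (c : E) (f : E → X) (h : E → I → X) (x : E) : X :=
  if dist x c ≤ 1 / 2 then f (lineMap c x (2 : ℝ))
  else h (lineMap c x (dist x c)⁻¹) (projIcc 0 1 zero_le_one (2 * dist x c - 1))

theorem dist_lineMap_of_nonneg (x : E) {r : ℝ} (hr : 0 ≤ r) :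
    dist (lineMap c x r) c = r * dist x c := by
  rw [dist_lineMap_left, Real.norm_of_nonneg hr, dist_comm]

theorem lineMap_mem_closedBall (hC : ∀ x ∈ C, ∀ s : ℝ, 0 ≤ s → lineMap c x s ∈ C) {x : E}
    (hx : x ∈ C) {r : ℝ} (hr : 0 ≤ r) (hrx : r * dist x c ≤ 1) :
    lineMap c x r ∈ closedBall c 1 ∩ C := by
  refine ⟨?_, hC x hx r hr⟩
  rwa [mem_closedBall, dist_lineMap_of_nonneg x hr]

theorem lineMap_inv_dist_mem_sphere (hC : ∀ x ∈ C, ∀ s : ℝ, 0 ≤ s → lineMap c x s ∈ C) {x : E}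
    (hx : x ∈ C) (hxc : 0 < dist x c) : lineMap c x (dist x c)⁻¹ ∈ sphere c 1 ∩ C := by
  refine ⟨?_, hC x hx _ (by positivity)⟩
  rw [mem_sphere, dist_lineMap_of_nonneg x (by positivity), inv_mul_cancel₀ hxc.ne']

theorem attachCollar_lineMap_half {x : E} (hx : dist x c ≤ 1) :
    attachCollar c f h (lineMap c x (1 / 2 : ℝ)) = f x := by
  rw [attachCollar, if_pos, lineMap_lineMap_right]
  · norm_num
  · rw [dist_lineMap_of_nonneg x (by norm_num)]
    linarith

theorem attachCollar_lineMap_sphere {x : E} (hx : dist x c = 1) (hfh : h x 0 = f x) (t : I) :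
    attachCollar c f h (lineMap c x ((1 + t) / 2 : ℝ)) = h x t := by
  rcases eq_or_ne t 0 with rfl | ht
  · simpa [hfh] using attachCollar_lineMap_half hx.le
  have ht' : 0 < (t : ℝ) := unitInterval.pos_iff_ne_zero.2 ht
  rw [attachCollar, dist_lineMap_of_nonneg x (by positivity), hx, if_neg (by linarith),
    lineMap_lineMap_right]
  congr 1
  · rw [mul_one, inv_mul_cancel₀ (by positivity), lineMap_apply_one]
  · convert projIcc_val zero_le_one t using 2
    ring

theorem mapsTo_attachCollar (hC : ∀ x ∈ C, ∀ s : ℝ, 0 ≤ s → lineMap c x s ∈ C)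
    (hf : MapsTo f (closedBall c 1 ∩ C) U) (hh : ∀ x ∈ sphere c 1 ∩ C, ∀ t, h x t ∈ U) :
    MapsTo (attachCollar c f h) (closedBall c 1 ∩ C) U := by
  rintro x ⟨-, hxC⟩
  rw [attachCollar]
  split_ifs with hx
  · exact hf (lineMap_mem_closedBall hC hxC zero_le_two (by linarith))
  · exact hh _ (lineMap_inv_dist_mem_sphere hC hxC (by linarith)) _

theorem attachCollar_sphere {x : E} (hx : dist x c = 1) (hfh : h x 0 = f x) :
    attachCollar c f h x = h x 1 := by
  simpa using attachCollar_lineMap_sphere hx hfh 1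

/-- The homotopy on the unit ball around `c` that starts at `f`, is `h` on the unit sphere and ends
at the end of a homotopy `Φ` of `attachCollar c f h`: at time `t`, the part of radius `(1 + t) / 2`
of the ball with collar is rescaled to the unit ball, while `Φ` runs at a speed that vanishes on
the unit sphere. -/
def extendHomotopy (c : E) (Φ : E → I → X) (x : E) (t : I) : X :=
  Φ (lineMap c x ((1 - t) / 2 + t * (max (dist x c) (1 / 2))⁻¹ : ℝ))
    (t * projIcc 0 1 zero_le_one (2 - 2 * dist x c))

variable {Φ : E → I → X}

theorem extendHomotopy_zero {x : E} : extendHomotopy c Φ x 0 = Φ (lineMap c x (1 / 2 : ℝ)) 0 := by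
  simp [extendHomotopy]

theorem extendHomotopy_sphere {x : E} (hx : dist x c = 1) (t : I) :
    extendHomotopy c Φ x t = Φ (lineMap c x ((1 + t) / 2 : ℝ)) 0 := by
  rw [extendHomotopy, hx, projIcc_of_le_left _ (by norm_num), max_eq_left (by norm_num)]
  congr 2
  · ring
  · exact mul_zero t

theorem lineMap_extendHomotopy_mem (hC : ∀ x ∈ C, ∀ s : ℝ, 0 ≤ s → lineMap c x s ∈ C) {x : E}
    (hx : x ∈ closedBall c 1 ∩ C) (t : I) :
    lineMap c x ((1 - t) / 2 + t * (max (dist x c) (1 / 2))⁻¹ : ℝ) ∈ closedBall c 1 ∩ C := by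
  have ht : 0 ≤ 1 - (t : ℝ) := sub_nonneg.2 t.2.2
  have ht' : 0 ≤ (t : ℝ) := t.2.1
  have hr : 0 ≤ (1 - t) / 2 + t * (max (dist x c) (1 / 2))⁻¹ := by positivity
  refine lineMap_mem_closedBall hC hx.2 hr ?_
  have hmax : (max (dist x c) (1 / 2))⁻¹ * dist x c ≤ 1 :=
    inv_mul_le_one_of_le₀ (le_max_left _ _) (by positivity)
  nlinarith [mul_le_mul_of_nonneg_left hmax ht', mul_le_mul_of_nonneg_left hx.1.out ht]

theorem extendHomotopy_one_mem (hC : ∀ x ∈ C, ∀ s : ℝ, 0 ≤ s → lineMap c x s ∈ C)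
    (hΦ : ∀ x ∈ closedBall c 1 ∩ C, Φ x 1 ∈ A) (hΦB : ∀ x ∈ sphere c 1 ∩ C, ∀ t, Φ x t ∈ A) {x : E}
    (hx : x ∈ closedBall c 1 ∩ C) : extendHomotopy c Φ x 1 ∈ A := by
  rcases le_total (dist x c) (1 / 2) with hxc | hxc
  · rw [extendHomotopy, projIcc_of_right_le _ (by linarith),
      show (1 : I) * ⟨1, _⟩ = 1 from mul_one 1]
    exact hΦ _ (lineMap_extendHomotopy_mem hC hx 1)
  · simp only [extendHomotopy, max_eq_left hxc, Icc.coe_one, sub_self, zero_div, zero_add, one_mul]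
    exact hΦB _ (lineMap_inv_dist_mem_sphere hC hx.2 (by linarith)) _

variable [TopologicalSpace X]

theorem continuousOn_attachCollar (hCc : IsClosed C)
    (hC : ∀ x ∈ C, ∀ s : ℝ, 0 ≤ s → lineMap c x s ∈ C)
    (hf : ContinuousOn f (closedBall c 1 ∩ C))
    (hh : ContinuousOn ↿h ((sphere c 1 ∩ C) ×ˢ univ)) (hfh : ∀ x ∈ sphere c 1 ∩ C, h x 0 = f x) :
    ContinuousOn (attachCollar c f h) (closedBall c 1 ∩ C) := by
  have inner : ContinuousOn (attachCollar c f h) ({x | dist x c ≤ 1 / 2} ∩ C) := by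
    refine (hf.comp (f := fun x => lineMap c x (2 : ℝ)) (by fun_prop) ?_).congr
      fun x hx => if_pos hx.1
    exact fun x hx => lineMap_mem_closedBall hC hx.2 zero_le_two (by linarith [hx.1.out])
  have outer : ContinuousOn (attachCollar c f h) ({x | 1 / 2 ≤ dist x c} ∩ C) := by
    have pos {x : E} (hx : x ∈ {x | 1 / 2 ≤ dist x c} ∩ C) : 0 < dist x c := by
      linarith [hx.1.out]
    have hpolar : ContinuousOn (fun x => ((lineMap c x (dist x c)⁻¹ : E),
        projIcc (0 : ℝ) 1 zero_le_one (2 * dist x c - 1))) ({x | 1 / 2 ≤ dist x c} ∩ C) := by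
      have hinv : ContinuousOn (fun x => (dist x c)⁻¹) ({x | 1 / 2 ≤ dist x c} ∩ C) :=
        ContinuousOn.inv₀ (by fun_prop) fun x hx => (pos hx).ne'
      exact (continuousOn_const.lineMap continuousOn_id hinv).prodMk (by fun_prop)
    refine (hh.comp hpolar fun x hx =>
      ⟨lineMap_inv_dist_mem_sphere hC hx.2 (pos hx), trivial⟩).congr fun x hx => ?_
    by_cases hx' : dist x c ≤ 1 / 2
    · have hxd : dist x c = 1 / 2 := hx'.antisymm hx.1
      have hsphere := lineMap_inv_dist_mem_sphere hC hx.2 (pos hx)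
      have hinv : (dist x c)⁻¹ = 2 := by norm_num [hxd]
      have htime : projIcc (0 : ℝ) 1 zero_le_one (2 * dist x c - 1) = 0 :=
        projIcc_of_le_left _ (by linarith)
      rw [hinv] at hsphere
      simp only [attachCollar, if_pos hx', Function.comp_apply, hinv, htime]
      exact (hfh _ hsphere).symm
    · exact if_neg hx'
  refine (inner.union_of_isClosed outer ?_ ?_).mono fun x hx => ?_
  · exact (isClosed_le (by fun_prop) continuous_const).inter hCc
  · exact (isClosed_le continuous_const (by fun_prop)).inter hCc
  · exact (le_total (dist x c) (1 / 2)).imp (⟨·, hx.2⟩) (⟨·, hx.2⟩)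

theorem continuousOn_extendHomotopy (hC : ∀ x ∈ C, ∀ s : ℝ, 0 ≤ s → lineMap c x s ∈ C)
    (hΦ : ContinuousOn ↿Φ ((closedBall c 1 ∩ C) ×ˢ univ)) :
    ContinuousOn ↿(extendHomotopy c Φ) ((closedBall c 1 ∩ C) ×ˢ univ) := by
  have hinv : Continuous fun p : E × I => (max (dist p.1 c) (1 / 2))⁻¹ :=
    (by fun_prop : Continuous fun p : E × I => max (dist p.1 c) (1 / 2)).inv₀
      fun p => by positivity
  have hr : Continuous fun p : E × I =>
      (1 - (p.2 : ℝ)) / 2 + p.2 * (max (dist p.1 c) (1 / 2))⁻¹ := by fun_prop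
  exact hΦ.comp ((continuous_const.lineMap continuous_fst hr).prodMk (by fun_prop)).continuousOn
    fun p hp => ⟨lineMap_extendHomotopy_mem hC hp.1 p.2, trivial⟩

theorem IsCompressible.exists_extension
    (hUA : IsCompressible (closedBall c 1 ∩ C) (sphere c 1 ∩ C) U A) (hCc : IsClosed C)
    (hC : ∀ x ∈ C, ∀ s : ℝ, 0 ≤ s → lineMap c x s ∈ C)
    (hf : ContinuousOn f (closedBall c 1 ∩ C)) (hfU : MapsTo f (closedBall c 1 ∩ C) U)
    (hh : ContinuousOn ↿h ((sphere c 1 ∩ C) ×ˢ univ)) (hhU : ∀ x ∈ sphere c 1 ∩ C, ∀ t, h x t ∈ U)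
    (hfh : ∀ x ∈ sphere c 1 ∩ C, h x 0 = f x) (hhA : ∀ x ∈ sphere c 1 ∩ C, h x 1 ∈ A) :
    ∃ H : E → I → X, ContinuousOn ↿H ((closedBall c 1 ∩ C) ×ˢ univ) ∧
      (∀ x ∈ closedBall c 1 ∩ C, ∀ t, H x t ∈ U) ∧ (∀ x ∈ closedBall c 1 ∩ C, H x 0 = f x) ∧
      (∀ x ∈ sphere c 1 ∩ C, ∀ t, H x t = h x t) ∧ ∀ x ∈ closedBall c 1 ∩ C, H x 1 ∈ A := by
  have hA : ∀ x ∈ sphere c 1 ∩ C, attachCollar c f h x ∈ A := fun x hx => by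
    rw [attachCollar_sphere hx.1 (hfh x hx)]
    exact hhA x hx
  obtain ⟨Φ, hΦ, hΦU, hΦ0, hΦB, hΦA⟩ := hUA (attachCollar c f h)
    (continuousOn_attachCollar hCc hC hf hh hfh) (mapsTo_attachCollar hC hfU hhU) hA
  refine ⟨extendHomotopy c Φ, continuousOn_extendHomotopy hC hΦ,
    fun x hx t => hΦU _ (lineMap_extendHomotopy_mem hC hx t) _, fun x hx => ?_, fun x hx t => ?_,
    fun x hx => extendHomotopy_one_mem hC hΦA (fun x hx t => hΦB x hx t ▸ hA x hx) hx⟩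
  · rw [extendHomotopy_zero, hΦ0, attachCollar_lineMap_half hx.1]
    exact lineMap_mem_closedBall hC hx.2 (by norm_num) (by linarith [hx.1.out])
  · rw [extendHomotopy_sphere hx.1, hΦ0, attachCollar_lineMap_sphere hx.1 (hfh x hx)]
    have ht := t.2
    exact lineMap_mem_closedBall hC hx.2 (by linarith [ht.1]) (by rw [hx.1.out]; linarith [ht.2])

end Compression

section Grid

variable {ι : Type*} {p q : ι → ℤ} {x : ι → ℝ}

/-- The affine subspace spanned by the cell with center `p`, see `gridCell`. -/
def gridSpan (p : ι → ℤ) : Set (ι → ℝ) := {x | ∀ i, Even (p i) → x i = p i}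

/-- The center of the open cell of the cubical grid `2ℤ^ι` containing `x`: an even coordinate
`2m` of `x` is kept, and one in `(2m, 2m + 2)` is replaced by `2m + 1`. -/
def gridCarrier (x : ι → ℝ) (i : ι) : ℤ := ⌊x i / 2⌋ + ⌈x i / 2⌉

theorem isClosed_gridSpan : IsClosed (gridSpan p) := by
  simp only [gridSpan, ofPred_forall]
  exact isClosed_iInter fun i => isClosed_iInter fun _ => isClosed_eq (by fun_prop) (by fun_prop)

theorem lineMap_mem_gridSpan (hx : x ∈ gridSpan p) (s : ℝ) :
    AffineMap.lineMap (fun i => (p i : ℝ)) x s ∈ gridSpan p := fun i hi => by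
  simp [AffineMap.lineMap_apply, hx i hi]

theorem gridCarrier_of_even {i : ι} {m : ℤ} (hm : Even m) (hx : x i = m) : gridCarrier x i = m := by
  obtain ⟨n, rfl⟩ := hm
  rw [gridCarrier, hx, show ((n + n : ℤ) : ℝ) / 2 = n by push_cast; ring, Int.floor_intCast,
    Int.ceil_intCast]

theorem gridCarrier_of_odd {i : ι} {m : ℤ} (hm : Odd m) (hx : |x i - m| < 1) :
    gridCarrier x i = m := by
  obtain ⟨n, rfl⟩ := hm
  push_cast at hx
  rw [abs_lt] at hx
  have hfloor : ⌊x i / 2⌋ = n := Int.floor_eq_iff.2 ⟨by linarith, by linarith⟩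
  have hceil : ⌈x i / 2⌉ = n + 1 :=
    Int.ceil_eq_iff.2 ⟨by push_cast; linarith, by push_cast; linarith⟩
  rw [gridCarrier, hfloor, hceil]
  ring

theorem gridCarrier_eq_of_even {i : ι} (h : Even (gridCarrier x i)) : x i = gridCarrier x i := by
  have hle := Int.floor_le_ceil (x i / 2)
  have hle' := Int.ceil_le_floor_add_one (x i / 2)
  rw [gridCarrier] at h ⊢
  have heq : ⌈x i / 2⌉ = ⌊x i / 2⌋ := by grind
  have h₁ := Int.floor_le (x i / 2)
  have h₂ := Int.le_ceil (x i / 2)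
  rw [heq] at h₂ ⊢
  push_cast
  linarith

theorem abs_sub_gridCarrier_lt (x : ι → ℝ) (i : ι) : |x i - gridCarrier x i| < 1 := by
  rw [gridCarrier, abs_lt]
  have := Int.lt_floor_add_one (x i / 2)
  have := Int.floor_le (x i / 2)
  have := Int.ceil_lt_add_one (x i / 2)
  have := Int.le_ceil (x i / 2)
  push_cast
  constructor <;> linarith

variable [Fintype ι]

/-- The closed cell with center `p` of the cubical grid with vertex set `2ℤ^ι`. It extends over
`[p i - 1, p i + 1]` in the directions `i` with `p i` odd, and is flat in the others. -/
def gridCell (p : ι → ℤ) : Set (ι → ℝ) := closedBall (fun i => (p i : ℝ)) 1 ∩ gridSpan p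

/-- The relative boundary of `gridCell p`. -/
def gridBoundary (p : ι → ℤ) : Set (ι → ℝ) := sphere (fun i => (p i : ℝ)) 1 ∩ gridSpan p

/-- The dimension of `gridCell p`. -/
def gridDim (p : ι → ℤ) : ℕ := Fintype.card {i // Odd (p i)}

theorem gridDim_le_card : gridDim p ≤ Fintype.card ι := Fintype.card_subtype_le _

theorem mem_gridCell_iff : x ∈ gridCell p ↔ ∀ i, |x i - p i| ≤ 1 ∧ (Even (p i) → x i = p i) := by
  simp only [gridCell, gridSpan, mem_inter_iff, mem_closedBall, dist_pi_le_iff zero_le_one,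
    Real.dist_eq, mem_ofPred_eq, forall_and]

theorem mem_gridCell_gridCarrier (x : ι → ℝ) : x ∈ gridCell (gridCarrier x) :=
  mem_gridCell_iff.2 fun i => ⟨(abs_sub_gridCarrier_lt x i).le, gridCarrier_eq_of_even⟩

theorem gridCarrier_eq_or (hx : x ∈ gridCell p) (i : ι) : gridCarrier x i = p i ∨
    Odd (p i) ∧ Even (gridCarrier x i) ∧ |x i - p i| = 1 := by
  obtain ⟨h₁, h₂⟩ := mem_gridCell_iff.1 hx i
  rcases Int.even_or_odd (p i) with hp | hp
  · exact .inl (gridCarrier_of_even hp (h₂ hp))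
  rcases h₁.lt_or_eq with h | h
  · exact .inl (gridCarrier_of_odd hp h)
  refine .inr ⟨hp, ?_, h⟩
  rcases eq_or_eq_neg_of_abs_eq h with h | h
  · rw [gridCarrier_of_even hp.add_one (by push_cast; linarith)]
    exact hp.add_one
  · rw [gridCarrier_of_even (hp.sub_odd odd_one) (by push_cast; linarith)]
    exact hp.sub_odd odd_one

theorem gridBoundary_subset_gridCell : gridBoundary p ⊆ gridCell p :=
  inter_subset_inter_left _ sphere_subset_closedBall

theorem mem_gridBoundary_iff : x ∈ gridBoundary p ↔ x ∈ gridCell p ∧ ∃ i, |x i - p i| = 1 := by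
  refine ⟨fun hx => ⟨gridBoundary_subset_gridCell hx, ?_⟩, fun ⟨hx, i, hi⟩ => ⟨?_, hx.2⟩⟩
  · by_contra! hne
    refine ((dist_pi_lt_iff one_pos).2 fun i => ?_).ne hx.1
    exact (mem_gridCell_iff.1 (gridBoundary_subset_gridCell hx) i).1.lt_of_ne (hne i)
  · refine le_antisymm hx.1 ?_
    rw [← hi, ← Real.dist_eq]
    exact dist_le_pi_dist x (fun i => (p i : ℝ)) i

theorem gridCarrier_eq_or_mem_gridBoundary (hx : x ∈ gridCell p) :
    gridCarrier x = p ∨ x ∈ gridBoundary p := by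
  by_contra! ⟨hne, hxp⟩
  obtain ⟨i, hi⟩ := Function.ne_iff.1 hne
  exact hxp (mem_gridBoundary_iff.2 ⟨hx, i, ((gridCarrier_eq_or hx i).resolve_left hi).2.2⟩)

theorem gridDim_gridCarrier_lt (hx : x ∈ gridBoundary p) : gridDim (gridCarrier x) < gridDim p := by
  obtain ⟨hxp, i, hi⟩ := mem_gridBoundary_iff.1 hx
  have hne : gridCarrier x i ≠ p i := fun h => (h ▸ abs_sub_gridCarrier_lt x i).ne hi
  rw [gridDim, gridDim, Fintype.card_subtype, Fintype.card_subtype]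
  refine Finset.card_lt_card (Finset.ssubset_iff_of_subset ?_ |>.2 ⟨i, ?_⟩)
  · intro j
    have := gridCarrier_eq_or hxp j
    grind
  · have := gridCarrier_eq_or hxp i
    grind

theorem gridDim_gridCarrier_le (hx : x ∈ gridCell p) : gridDim (gridCarrier x) ≤ gridDim p := by
  rcases gridCarrier_eq_or_mem_gridBoundary hx with h | h
  · rw [h]
  · exact (gridDim_gridCarrier_lt h).le

theorem gridCell_gridCarrier_subset (hx : x ∈ gridCell p) :
    gridCell (gridCarrier x) ⊆ gridCell p := by
  intro y hy
  refine mem_gridCell_iff.2 fun i => ?_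
  have hyi := mem_gridCell_iff.1 hy i
  rcases gridCarrier_eq_or hx i with h | ⟨hp, he, h⟩
  · rwa [h] at hyi
  · rw [hyi.2 he, ← gridCarrier_eq_of_even he]
    exact ⟨h.le, fun hp' => absurd hp (Int.not_odd_iff_even.2 hp')⟩

theorem isClosed_gridCell : IsClosed (gridCell p) := isClosed_closedBall.inter isClosed_gridSpan

theorem locallyFinite_gridCell : LocallyFinite (gridCell : (ι → ℤ) → Set (ι → ℝ)) := by
  classical
  refine fun x => ⟨ball x 1, ball_mem_nhds x one_pos, ?_⟩
  refine (finite_Icc (fun i => ⌊x i⌋ - 2) (fun i => ⌈x i⌉ + 2)).subset ?_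
  rintro p ⟨y, hyp, hyx⟩
  have bound (i : ι) : |x i - p i| ≤ 2 := by
    have := (mem_gridCell_iff.1 hyp i).1
    have := (dist_pi_lt_iff one_pos).1 hyx i
    rw [Real.dist_eq] at this
    grind
  refine ⟨fun i => ?_, fun i => ?_⟩ <;> have := abs_le.1 (bound i)
  · have : (⌊x i⌋ : ℝ) - 2 ≤ p i := by linarith [Int.floor_le (x i)]
    exact_mod_cast this
  · have : (p i : ℝ) ≤ ⌈x i⌉ + 2 := by linarith [Int.le_ceil (x i)]
    exact_mod_cast this

theorem continuousOn_biUnion_gridCell {Z : Type*} [TopologicalSpace Z] {h : (ι → ℝ) → I → Z}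
    {C : Set (ι → ℤ)} (hC : ∀ p ∈ C, ContinuousOn ↿h (gridCell p ×ˢ univ)) :
    ContinuousOn ↿h ((⋃ p ∈ C, gridCell p) ×ˢ univ) := by
  rw [biUnion_eq_iUnion, prod_univ, preimage_iUnion]
  refine ((locallyFinite_gridCell.comp_injective
    Subtype.val_injective).preimage_continuous continuous_fst).continuousOn_iUnion
      (fun p => isClosed_gridCell.preimage continuous_fst) fun p => ?_
  simpa only [prod_univ, Function.comp_apply] using hC p p.2

end Grid

section GridCellCompression

variable {ι X : Type*} [Fintype ι] {p : ι → ℤ} {x : ι → ℝ}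

/-- A numbering of the directions in which `gridCell p` extends. -/
def gridDirEquiv (p : ι → ℤ) : {i // Odd (p i)} ≃ Fin (gridDim p) := Fintype.equivFin _

/-- The parametrization of `gridCell p` by a cube. -/
def gridCellOfCube (p : ι → ℤ) (y : Fin (gridDim p) → I) (i : ι) : ℝ :=
  if h : Odd (p i) then p i + (2 * y (gridDirEquiv p ⟨i, h⟩) - 1) else p i

/-- The coordinates on `gridCell p` inverse to `gridCellOfCube p`. -/
def cubeOfGridCell (p : ι → ℤ) (x : ι → ℝ) (m : Fin (gridDim p)) : I :=
  let i := (gridDirEquiv p).symm m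
  projIcc 0 1 zero_le_one ((x i - p i + 1) / 2)

theorem continuous_gridCellOfCube : Continuous (gridCellOfCube p) := by
  refine continuous_pi fun i => ?_
  unfold gridCellOfCube
  split_ifs <;> fun_prop

theorem continuous_cubeOfGridCell : Continuous (cubeOfGridCell p) := by
  unfold cubeOfGridCell
  fun_prop

theorem gridCellOfCube_mem (y : Fin (gridDim p) → I) : gridCellOfCube p y ∈ gridCell p := by
  refine mem_gridCell_iff.2 fun i => ?_
  by_cases h : Odd (p i)
  · have hy := (y (gridDirEquiv p ⟨i, h⟩)).2
    simp only [gridCellOfCube, h, dite_true, add_sub_cancel_left, abs_le]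
    exact ⟨⟨by linarith [hy.1], by linarith [hy.2]⟩, fun h' => absurd h (Int.not_odd_iff_even.2 h')⟩
  · simp [gridCellOfCube, h]

theorem gridCellOfCube_mem_gridBoundary {y : Fin (gridDim p) → I}
    (hy : y ∈ cubeBoundary (gridDim p)) : gridCellOfCube p y ∈ gridBoundary p := by
  obtain ⟨m, hm⟩ := hy
  let i := (gridDirEquiv p).symm m
  refine mem_gridBoundary_iff.2 ⟨gridCellOfCube_mem y, i, ?_⟩
  rcases hm with hm | hm
  · simp [gridCellOfCube, i, hm, (i.2 : Odd _)]
  · norm_num [gridCellOfCube, i, hm, (i.2 : Odd _)]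

theorem cubeOfGridCell_gridDirEquiv (hx : x ∈ gridCell p) (i : {i // Odd (p i)}) :
    (cubeOfGridCell p x (gridDirEquiv p i) : ℝ) = (x i - p i + 1) / 2 := by
  have := abs_le.1 (mem_gridCell_iff.1 hx i).1
  rw [cubeOfGridCell, Equiv.symm_apply_apply, projIcc_of_mem _ ⟨by linarith, by linarith⟩]

theorem gridCellOfCube_cubeOfGridCell (hx : x ∈ gridCell p) :
    gridCellOfCube p (cubeOfGridCell p x) = x := by
  ext i
  by_cases h : Odd (p i)
  · simp only [gridCellOfCube, h, dite_true, cubeOfGridCell_gridDirEquiv hx]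
    ring
  · simp only [gridCellOfCube, h, dite_false]
    exact (hx.2 i (Int.not_odd_iff_even.1 h)).symm

theorem cubeOfGridCell_mem_cubeBoundary (hx : x ∈ gridBoundary p) :
    cubeOfGridCell p x ∈ cubeBoundary (gridDim p) := by
  obtain ⟨hxp, i, hi⟩ := mem_gridBoundary_iff.1 hx
  have hodd : Odd (p i) := by
    by_contra h
    norm_num [hxp.2 i (Int.not_odd_iff_even.1 h)] at hi
  refine ⟨gridDirEquiv p ⟨i, hodd⟩, ?_⟩
  simp only [Subtype.ext_iff, cubeOfGridCell_gridDirEquiv hxp, Icc.coe_zero, Icc.coe_one]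
  rcases eq_or_eq_neg_of_abs_eq hi with h | h <;> rw [h] <;> norm_num

theorem IsConnectedPair.isCompressible_gridCell [TopologicalSpace X] {U A : Set X} {k : ℕ}
    (hUA : IsConnectedPair U ((↑) ⁻¹' A) k) (hp : gridDim p ≤ k) :
    IsCompressible (gridCell p) (gridBoundary p) U A := by
  intro f hf hfU hfA
  obtain ⟨g, hg, ⟨H⟩⟩ := hUA.2 _ hp
    ⟨fun y => ⟨f (gridCellOfCube p y), hfU (gridCellOfCube_mem y)⟩, Continuous.subtype_mk
      (hf.comp_continuous continuous_gridCellOfCube gridCellOfCube_mem) _⟩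
    fun y hy => hfA (gridCellOfCube_mem_gridBoundary hy)
  refine ⟨fun x t => H (t, cubeOfGridCell p x), ?_, fun x _ t => (H _).2, fun x hx => ?_,
    fun x hx t => ?_, fun x _ => ?_⟩
  · have := continuous_cubeOfGridCell (p := p)
    exact (by fun_prop : Continuous fun q : (ι → ℝ) × I =>
      (H (q.2, cubeOfGridCell p q.1) : X)).continuousOn
  · simp [gridCellOfCube_cubeOfGridCell hx]
  · simp [H.eq_fst t (cubeOfGridCell_mem_cubeBoundary hx),
      gridCellOfCube_cubeOfGridCell (gridBoundary_subset_gridCell hx)]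
  · simpa using hg _

end GridCellCompression

section PushOff

variable {E X : Type*} [TopologicalSpace E] [TopologicalSpace X] {F : E → X} {A : Set X}
  {V : E → Set X} {S : Set E} {h h' : E → I → X}

/-- On `S`, the family `h` is a homotopy that pushes `F` into `A`, and the track of each point `x`
stays in the control set `V x`. -/
structure IsPushOffOn (F : E → X) (A : Set X) (V : E → Set X) (S : Set E) (h : E → I → X) :
    Prop where
  continuousOn : ContinuousOn ↿h (S ×ˢ univ)
  zero : ∀ x ∈ S, h x 0 = F x
  one_mem : ∀ x ∈ S, h x 1 ∈ A
  mem : ∀ x ∈ S, ∀ t, h x t ∈ V x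

namespace IsPushOffOn

theorem congr (hh : IsPushOffOn F A V S h) (heq : ∀ x ∈ S, h' x = h x) :
    IsPushOffOn F A V S h' where
  continuousOn := hh.continuousOn.congr fun p hp => congr_fun (heq p.1 hp.1) p.2
  zero x hx := by rw [heq x hx, hh.zero x hx]
  one_mem x hx := by rw [heq x hx]; exact hh.one_mem x hx
  mem x hx t := by rw [heq x hx]; exact hh.mem x hx t

end IsPushOffOn

theorem isPushOffOn_const (hF : ContinuousOn F S) (hFA : MapsTo F S A) (hFV : ∀ x ∈ S, F x ∈ V x) :
    IsPushOffOn F A V S fun x _ => F x where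
  continuousOn := hF.comp continuousOn_fst fun _ hp => hp.1
  zero _ _ := rfl
  one_mem := hFA
  mem x hx _ := hFV x hx

end PushOff

section GridPushOff

variable {ι X : Type*} [Fintype ι] [TopologicalSpace X] {F : (ι → ℝ) → X} {A : Set X}
  {W : (ι → ℤ) → (ι → ℝ) → Set X} {h : (ι → ℝ) → I → X} {p : ι → ℤ}

theorem IsPushOffOn.exists_extension_gridCell {V : (ι → ℝ) → Set X} {U : Set X}
    (hh : IsPushOffOn F A V (gridBoundary p) h) (hF : ContinuousOn F (gridCell p))
    (hFU : MapsTo F (gridCell p) U) (hV : ∀ x ∈ gridCell p, V x = U)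
    (hU : IsCompressible (gridCell p) (gridBoundary p) U A) :
    ∃ H, IsPushOffOn F A V (gridCell p) H ∧ ∀ x ∈ gridBoundary p, H x = h x := by
  obtain ⟨H, hH, hHU, hH0, hHB, hHA⟩ := hU.exists_extension isClosed_gridSpan
    (fun _ hx s _ => lineMap_mem_gridSpan hx s) hF hFU hh.continuousOn
    (fun x hx t => hV x (gridBoundary_subset_gridCell hx) ▸ hh.mem x hx t) hh.zero hh.one_mem
  exact ⟨H, ⟨hH, hH0, hHA, fun x hx t => hV x hx ▸ hHU x hx t⟩, fun x hx => funext (hHB x hx)⟩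

/-- Control sets for pushing `F` into `A` cell by cell. On cells already mapped to `A` the push-off
is forced to be constant; every other cell has a single control set in which it can be compressed
into `A`. -/
structure IsGridControl (F : (ι → ℝ) → X) (A : Set X) (W : (ι → ℤ) → (ι → ℝ) → Set X) : Prop where
  self_mem : ∀ p, ∀ x ∈ gridCell p, F x ∈ W p x
  carrier_subset : ∀ p, ∀ x ∈ gridCell p, W (gridCarrier x) x ⊆ W p x
  of_mapsTo : ∀ p, MapsTo F (gridCell p) A → ∀ x, W p x = {F x}
  of_not_mapsTo : ∀ p, ¬ MapsTo F (gridCell p) A →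
    ∃ U, (∀ x, W p x = U) ∧ IsCompressible (gridCell p) (gridBoundary p) U A

namespace IsGridControl

theorem exists_extension (hW : IsGridControl F A W) (hF : Continuous F)
    (hh : IsPushOffOn F A (W p) (gridBoundary p) h) :
    ∃ H, IsPushOffOn F A (W p) (gridCell p) H ∧ ∀ x ∈ gridBoundary p, H x = h x := by
  by_cases hp : MapsTo F (gridCell p) A
  · refine ⟨fun x _ => F x, isPushOffOn_const hF.continuousOn hp (hW.self_mem p),
      fun x hx => funext fun t => ?_⟩
    have hmem := hh.mem x hx t
    rw [hW.of_mapsTo p hp x] at hmem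
    exact hmem.symm
  · obtain ⟨U, hWU, hU⟩ := hW.of_not_mapsTo p hp
    exact hh.exists_extension_gridCell hF.continuousOn
      (fun x hx => hWU x ▸ hW.self_mem p x hx) (fun x _ => hWU x) hU

theorem isPushOffOn_gridBoundary (hW : IsGridControl F A W)
    (hh : ∀ q, gridDim q < gridDim p → IsPushOffOn F A (W q) (gridCell q) h) :
    IsPushOffOn F A (W p) (gridBoundary p) h := by
  have hcell := mem_gridCell_gridCarrier (ι := ι)
  have hcarrier {x} (hx : x ∈ gridBoundary p) := hh _ (gridDim_gridCarrier_lt hx)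
  refine ⟨?_, fun x hx => (hcarrier hx).zero x (hcell x),
    fun x hx => (hcarrier hx).one_mem x (hcell x), fun x hx t =>
      hW.carrier_subset p x (gridBoundary_subset_gridCell hx) ((hcarrier hx).mem x (hcell x) t)⟩
  refine (continuousOn_biUnion_gridCell (C := {q | gridDim q < gridDim p})
    fun q hq => (hh q hq).continuousOn).mono (prod_mono_left fun x hx => ?_)
  exact mem_biUnion (x := gridCarrier x) (gridDim_gridCarrier_lt hx) (hcell x)

theorem exists_isPushOffOn_of_gridDim_lt (hW : IsGridControl F A W) (hF : Continuous F) (n : ℕ) :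
    ∃ h, ∀ p, gridDim p < n → IsPushOffOn F A (W p) (gridCell p) h := by
  induction n with
  | zero => exact ⟨fun x _ => F x, by simp⟩
  | succ n ih =>
    obtain ⟨h, hh⟩ := ih
    have hboundary (p) (hp : gridDim p = n) : IsPushOffOn F A (W p) (gridBoundary p) h :=
      hW.isPushOffOn_gridBoundary fun q hq => hh q (hp ▸ hq)
    choose H hH hHh using fun p hp => hW.exists_extension hF (hboundary p hp)
    refine ⟨fun x => if hx : gridDim (gridCarrier x) = n then H (gridCarrier x) hx x else h x,
      fun p hp => ?_⟩
    rcases Nat.lt_succ_iff_lt_or_eq.1 hp with hp | hp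
    · refine (hh p hp).congr fun x hx => dif_neg ?_
      exact ((gridDim_gridCarrier_le hx).trans_lt hp).ne
    · refine (hH p hp).congr fun x hx => ?_
      rcases gridCarrier_eq_or_mem_gridBoundary hx with rfl | hxp
      · exact dif_pos hp
      · rw [dif_neg (hp ▸ gridDim_gridCarrier_lt hxp).ne, hHh p hp x hxp]

theorem exists_pushOff (hW : IsGridControl F A W) (hF : Continuous F) :
    ∃ h : (ι → ℝ) → I → X, Continuous ↿h ∧ (∀ x, h x 0 = F x) ∧ (∀ x, h x 1 ∈ A) ∧
      ∀ x, MapsTo F (gridCell (gridCarrier x)) A → ∀ t, h x t = F x := by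
  obtain ⟨h, hh⟩ := hW.exists_isPushOffOn_of_gridDim_lt hF (Fintype.card ι + 1)
  have hh (p) : IsPushOffOn F A (W p) (gridCell p) h := hh p (Nat.lt_succ_of_le gridDim_le_card)
  have hcell := mem_gridCell_gridCarrier (ι := ι)
  refine ⟨h, ?_, fun x => (hh _).zero x (hcell x), fun x => (hh _).one_mem x (hcell x),
    fun x hx t => ?_⟩
  · have hcont := continuousOn_biUnion_gridCell (C := univ) fun p _ => (hh p).continuousOn
    have hcover : ⋃ p ∈ univ, gridCell p = (univ : Set (ι → ℝ)) :=
      eq_univ_of_forall fun x => mem_biUnion trivial (hcell x)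
    rwa [hcover, univ_prod_univ, continuousOn_univ] at hcont
  · have hmem := (hh _).mem x (hcell x) t
    rwa [hW.of_mapsTo _ hx] at hmem

end IsGridControl

theorem exists_isGridControl {T : ℕ → (ι → ℝ) → Set X} {k : ℕ} (hk : Fintype.card ι ≤ k)
    (hT : ∀ m x, F x ∉ A → IsConnectedPair (T m x) ((↑) ⁻¹' A) k)
    (hFT : ∀ p, ∀ x ∈ gridCell p, F x ∉ A → ∀ y ∈ gridCell p, ∀ m ≤ Fintype.card ι, F y ∈ T m x)
    (hTT : ∀ p, ∀ x ∈ gridCell p, F x ∉ A → ∀ y ∈ gridCell p, F y ∉ A →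
      ∀ m, ∀ n ≤ Fintype.card ι, m < n → T n y ⊆ T m x) :
    ∃ W, IsGridControl F A W := by
  classical
  have hz (p) (hp : ¬ MapsTo F (gridCell p) A) : ∃ z ∈ gridCell p, F z ∉ A := by
    simpa only [MapsTo, not_forall, exists_prop] using hp
  choose! z hz hzA using hz
  let W (p : ι → ℤ) (x : ι → ℝ) : Set X :=
    if MapsTo F (gridCell p) A then {F x} else T (Fintype.card ι - gridDim p) (z p)
  have self_mem (p) (x) (hx : x ∈ gridCell p) : F x ∈ W p x := by
    by_cases hp : MapsTo F (gridCell p) A <;> simp only [W, hp, if_true, if_false]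
    · rfl
    · exact hFT p _ (hz p hp) (hzA p hp) x hx _ (Nat.sub_le _ _)
  refine ⟨W, self_mem, fun p x hx => ?_, fun p hp x => if_pos hp, fun p hp => ?_⟩
  · by_cases hq : MapsTo F (gridCell (gridCarrier x)) A
    · simpa only [W, if_pos hq, singleton_subset_iff] using self_mem p x hx
    have hqp := gridCell_gridCarrier_subset hx
    have hp : ¬ MapsTo F (gridCell p) A := fun hp => hq (hp.mono_left hqp)
    rcases gridCarrier_eq_or_mem_gridBoundary hx with hxp | hxp
    · rw [hxp]
    · have hlt := gridDim_gridCarrier_lt hxp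
      have hle := gridDim_le_card (p := p)
      simpa only [W, if_neg hp, if_neg hq] using hTT p _ (hz p hp) (hzA p hp) _ (hqp (hz _ hq))
        (hzA _ hq) _ _ (Nat.sub_le _ _) (by omega)
  · exact ⟨_, fun _ => if_neg hp, (hT _ _ (hzA p hp)).isCompressible_gridCell
      (gridDim_le_card.trans hk)⟩

end GridPushOff

section CubeSubdivision

variable {ι : Type*} {N : ℕ}

/-- The cube `[0, 2N]^ι` of the grid, rescaled to the unit cube; other points are projected. -/
def unitCubeOfGrid (N : ℕ) (x : ι → ℝ) (i : ι) : I := projIcc 0 1 zero_le_one (x i / (2 * N))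

theorem continuous_unitCubeOfGrid : Continuous (unitCubeOfGrid N : (ι → ℝ) → ι → I) := by
  unfold unitCubeOfGrid
  fun_prop

theorem unitCubeOfGrid_smul (hN : N ≠ 0) (y : ι → I) :
    unitCubeOfGrid N (fun i => 2 * N * (y i : ℝ)) = y := by
  ext i
  rw [unitCubeOfGrid, mul_div_cancel_left₀ _ (by positivity), projIcc_val]

theorem dist_unitCubeOfGrid_le [Fintype ι] {p : ι → ℤ} {x y : ι → ℝ} (hx : x ∈ gridCell p)
    (hy : y ∈ gridCell p) : dist (unitCubeOfGrid N x) (unitCubeOfGrid N y) ≤ 1 / N := by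
  refine (dist_pi_le_iff (by positivity)).2 fun i => ?_
  have hxy : |x i - y i| ≤ 2 := by
    have := (mem_gridCell_iff.1 hx i).1
    have := (mem_gridCell_iff.1 hy i).1
    grind
  calc dist (unitCubeOfGrid N x i) (unitCubeOfGrid N y i)
      ≤ |x i / (2 * N) - y i / (2 * N)| := abs_projIcc_sub_projIcc _
    _ = |x i - y i| / (2 * N) := by
      rw [← sub_div, abs_div, abs_of_nonneg (by positivity : (0 : ℝ) ≤ 2 * N)]
    _ ≤ 2 / (2 * N) := by gcongr
    _ = 1 / N := by rw [div_mul_eq_div_div, div_self two_ne_zero]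

theorem unitCubeOfGrid_mem_cubeBoundary {l : ℕ} (hN : N ≠ 0) {y : Fin l → I}
    (hy : y ∈ cubeBoundary l) {z : Fin l → ℝ}
    (hz : z ∈ gridCell (gridCarrier fun i => 2 * N * (y i : ℝ))) :
    unitCubeOfGrid N z ∈ cubeBoundary l := by
  obtain ⟨i, hi⟩ := hy
  have even_coord {m : ℤ} (hm : Even m) (hmy : 2 * N * (y i : ℝ) = m) : z i = m := by
    have hcarrier := gridCarrier_of_even (x := fun i => 2 * N * (y i : ℝ)) hm hmy
    rw [hz.2 i (hcarrier ▸ hm), hcarrier]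
  rcases hi with hi | hi
  · refine ⟨i, .inl ?_⟩
    rw [unitCubeOfGrid, even_coord Even.zero (by simp [hi]), Int.cast_zero, zero_div, projIcc_left]
    rfl
  · refine ⟨i, .inr ?_⟩
    have hm := even_coord (even_two_mul (N : ℤ)) (by simp [hi])
    push_cast at hm
    rw [unitCubeOfGrid, hm, div_self (by positivity), projIcc_right]
    rfl

end CubeSubdivision

section Localization

variable {X : Type*} [TopologicalSpace X] {A : Set X} {k l : ℕ}

theorem exists_isGridControl_unitCubeOfGrid {ι : Type*} [Fintype ι] (hι : Fintype.card ι ≤ k)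
    (hA : IsOpen A)
    (hloc : ∀ y ∉ A, ∀ V ∈ 𝓝 y, ∃ U ∈ 𝓝 y, U ⊆ V ∧ IsConnectedPair U ((↑) ⁻¹' A) k)
    {f : (ι → I) → X} (hf : Continuous f) :
    ∃ N ≠ 0, ∃ W, IsGridControl (f ∘ unitCubeOfGrid N) A W := by
  have hK : IsCompact (f ⁻¹' Aᶜ) := (hA.isClosed_compl.preimage hf).isCompact
  obtain ⟨T, hT, hTclose⟩ := exists_nhds_tower hf hK (fun x hx => hloc (f x) hx) (Fintype.card ι)
  obtain ⟨δ, hδ, hclose⟩ := Metric.mem_uniformity_dist.1 hTclose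
  obtain ⟨N, hN⟩ := exists_nat_one_div_lt hδ
  have near {p x y} (hx : x ∈ gridCell p) (hy : y ∈ gridCell p) (hxA) :=
    hclose ((dist_unitCubeOfGrid_le (N := N + 1) hx hy).trans_lt (by exact_mod_cast hN)) hxA
  exact ⟨N + 1, N.succ_ne_zero, exists_isGridControl hι (T := fun m x => T m (unitCubeOfGrid _ x))
    (fun m x hx => hT m _ hx) (fun p x hx hxA y hy => (near hx hy hxA).1)
    fun p x hx hxA y hy => (near hx hy hxA).2⟩

theorem exists_homotopyRel_cubeBoundary (hA : IsOpen A)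
    (hloc : ∀ y ∉ A, ∀ V ∈ 𝓝 y, ∃ U ∈ 𝓝 y, U ⊆ V ∧ IsConnectedPair U ((↑) ⁻¹' A) k)
    (hl : l ≤ k) (f : C(Fin l → I, X)) (hf : MapsTo f (cubeBoundary l) A) :
    ∃ g : C(Fin l → I, X), (∀ x, g x ∈ A) ∧
      Nonempty (ContinuousMap.HomotopyRel f g (cubeBoundary l)) := by
  obtain ⟨N, hN, W, hW⟩ :=
    exists_isGridControl_unitCubeOfGrid (by simpa using hl) hA hloc f.continuous
  obtain ⟨h, hcont, h0, h1, hrel⟩ :=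
    hW.exists_pushOff (f.continuous.comp continuous_unitCubeOfGrid)
  let s (y : Fin l → I) (i : Fin l) : ℝ := 2 * N * y i
  have hs : Continuous s := by fun_prop
  have hfs (y) : f (unitCubeOfGrid N (s y)) = f y := by rw [unitCubeOfGrid_smul hN]
  let H : C(I × (Fin l → I), X) :=
    ⟨fun p => h (s p.2) p.1, hcont.comp ((hs.comp continuous_snd).prodMk continuous_fst)⟩
  refine ⟨H.comp ⟨fun y => (1, y), by fun_prop⟩, fun y => h1 _,
    ⟨⟨H, fun y => (h0 _).trans (hfs y), fun y => rfl⟩, fun t y hy => ?_⟩⟩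
  exact (hrel _ (fun z hz => hf (unitCubeOfGrid_mem_cubeBoundary hN hy hz)) t).trans (hfs y)

end Localization

theorem localization_general {X : Type*} [TopologicalSpace X] (Y : Set X) (hY : IsClosed Y)
    (k : ℕ)
    (h : ∀ y ∈ Y, ∃ 𝒰 : Set (Set X),
      (∀ U ∈ 𝒰, U ∈ 𝓝 y) ∧ (∀ V ∈ 𝓝 y, ∃ U ∈ 𝒰, U ⊆ V) ∧
      (∀ U ∈ 𝒰, IsConnectedPair U {x : U | (x : X) ∉ Y} k)) :
    IsConnectedPair X Yᶜ k := by
  have hloc : ∀ y ∉ Yᶜ, ∀ V ∈ 𝓝 y, ∃ U ∈ 𝓝 y, U ⊆ V ∧ IsConnectedPair U ((↑) ⁻¹' Yᶜ) k := by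
    intro y hy V hV
    obtain ⟨𝒰, h𝒰, hbasis, hconn⟩ := h y (not_notMem.1 hy)
    obtain ⟨U, hU, hUV⟩ := hbasis V hV
    exact ⟨U, h𝒰 U hU, hUV, hconn U hU⟩
  refine ⟨fun x => ?_, fun l hl => exists_homotopyRel_cubeBoundary hY.isOpen_compl hloc hl⟩
  by_cases hx : x ∈ Yᶜ
  · exact ⟨x, hx, .refl x⟩
  · obtain ⟨U, hU, -, hconn⟩ := hloc x hx univ Filter.univ_mem
    obtain ⟨a, ha, hxa⟩ := hconn.1 ⟨x, mem_of_mem_nhds hU⟩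
    exact ⟨a, ha, hxa.map continuous_subtype_val⟩

/-- Localization: if every point of the closed set Y has a neighborhood basis (U_ε) such that
each pair (U_ε, U_ε \ Y) is k-connected, then (X, X \ Y) is k-connected. -/
theorem localization {X : Type} [TopologicalSpace X] [T2Space X] (Y : Set X)
    (hY : IsClosed Y) (k : ℕ)
    (h : ∀ y ∈ Y, ∃ 𝒰 : Set (Set X),
      (∀ U ∈ 𝒰, U ∈ nhds y) ∧ (∀ V ∈ nhds y, ∃ U ∈ 𝒰, U ⊆ V) ∧
      (∀ U ∈ 𝒰, IsConnectedPair U {x : U | (x : X) ∉ Y} k)) :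
    IsConnectedPair X Yᶜ k :=
  localization_general Y hY k h
end
end

section
/- The Chabauty space 𝒞(ℝⁿ) is simply connected for every n ≥ 1. -/
noncomputable section

abbrev Euc (n : ℕ) := EuclideanSpace ℝ (Fin n)

/-- A point of the Chabauty space of ℝⁿ: a closed additive subgroup. -/
def ChabautyPoint (n : ℕ) : Type := {Γ : AddSubgroup (Euc n) // IsClosed (Γ : Set (Euc n))}

/-- The Chabauty (Fell) topology on the space of closed subgroups of ℝⁿ. -/
instance chabautyTopology (n : ℕ) : TopologicalSpace (ChabautyPoint n) :=
  TopologicalSpace.generateFrom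
    ({S | ∃ K : Set (Euc n), IsCompact K ∧
        S = {Γ : ChabautyPoint n | ((Γ.1 : Set (Euc n)) ∩ K) = ∅}} ∪
     {S | ∃ U : Set (Euc n), IsOpen U ∧
        S = {Γ : ChabautyPoint n | ((Γ.1 : Set (Euc n)) ∩ U).Nonempty}})

/-!
Let `D` be the set of discrete subgroups. Blowing a discrete group up homothetically drives its
nonzero elements to infinity, so `D` contracts to the trivial group. It therefore suffices that
every point is joined to `D` by a path entering `D` immediately, and that every short enough path
with endpoints in `D` deforms into `D`: a loop is then cut into short paths, each pushed into `D`.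

A closed subgroup is a linear subspace plus a discrete group; filling the subspace with finer and
finer lattices gives the path into `D`. For the second property, let `V` be the linear part of `Γ`.
Any group near `Γ` is, up to a small shear `1 + N` with `N : V → Vᗮ`, a cocompact subgroup of `V`
together with elements at distance at least `R` from `V`. Undoing the shear and then expanding in
the directions `Vᗮ` deforms a short path into the cocompact subgroups of `V`. These contract to `V`
by homothety, the discrete ones among them are lattices, and any two lattices of `V` are joined
through lattices, so the deformed path can be pushed into `D`.
-/

open Filter Metric Module Topology unitInterval
open Path.Homotopic.Quotient (mk)
open scoped Matrix

section PathClasses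

variable {X : Type*} [TopologicalSpace X] {a b c d : X} {D S : Set X}

theorem pathClass_symm_trans (P : Path.Homotopic.Quotient a b) (Q : Path.Homotopic.Quotient b c) :
    (P.trans Q).symm = Q.symm.trans P.symm := by
  induction P, Q using Path.Homotopic.Quotient.ind₂ with | mk p q =>
  simp only [← Path.Homotopic.Quotient.mk_trans, ← Path.Homotopic.Quotient.mk_symm,
    Path.trans_symm]

theorem pathClass_trans_symm_cancel_left (P : Path.Homotopic.Quotient a b)
    (Q : Path.Homotopic.Quotient a c) : P.trans (P.symm.trans Q) = Q := by
  rw [← Path.Homotopic.Quotient.trans_assoc, Path.Homotopic.Quotient.trans_symm,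
    Path.Homotopic.Quotient.refl_trans]

theorem pathClass_trans_symm_cancel_right (P : Path.Homotopic.Quotient a b)
    (Q : Path.Homotopic.Quotient b c) : (P.trans Q).trans Q.symm = P := by
  rw [Path.Homotopic.Quotient.trans_assoc, Path.Homotopic.Quotient.trans_symm,
    Path.Homotopic.Quotient.trans_refl]

theorem mk_map_trans_mk_evalAt {Y : Type*} [TopologicalSpace Y] {f g : C(Y, X)}
    (H : f.Homotopy g) {y z : Y} (p : Path y z) :
    (mk (p.map f.continuous)).trans (mk (H.evalAt z)) =
      (mk (H.evalAt y)).trans (mk (p.map g.continuous)) := by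
  let F : C(I × I, X) := H.toContinuousMap.comp ((ContinuousMap.id I).prodMap p.toContinuousMap)
  let bottom : Path ((0, 0) : I × I) (0, 1) := ⟨⟨fun t ↦ (0, t), by fun_prop⟩, rfl, rfl⟩
  let top : Path ((1, 0) : I × I) (1, 1) := ⟨⟨fun t ↦ (1, t), by fun_prop⟩, rfl, rfl⟩
  let left : Path ((0, 0) : I × I) (1, 0) := ⟨⟨fun s ↦ (s, 0), by fun_prop⟩, rfl, rfl⟩
  let right : Path ((0, 1) : I × I) (1, 1) := ⟨⟨fun s ↦ (s, 1), by fun_prop⟩, rfl, rfl⟩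
  have : ContractibleSpace I := (convex_Icc (0 : ℝ) 1).contractibleSpace ⟨0, by simp⟩
  have hF := (SimplyConnectedSpace.paths_homotopic (bottom.trans right) (left.trans top)).map F
  rw [Path.map_trans, Path.map_trans] at hF
  have h00 : f y = F (0, 0) := by simp [F]
  have h11 : g z = F (1, 1) := by simp [F]
  simp only [← Path.Homotopic.Quotient.mk_trans]
  refine Path.Homotopic.Quotient.eq.2 ?_
  convert Path.Homotopic.pathCast hF h00 h11 using 1 <;>
  · ext t
    simp only [Path.trans_apply, Path.cast_coe]
    split_ifs <;>
      simp [F, bottom, top, left, right, ContinuousMap.Homotopy.evalAt]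

theorem homotopic_of_nullhomotopic_inclusion
    (hS : (⟨Subtype.val, continuous_subtype_val⟩ : C(S, X)).Nullhomotopic) {p q : Path a b}
    (hp : ∀ t, p t ∈ S) (hq : ∀ t, q t ∈ S) : p.Homotopic q := by
  obtain ⟨x, ⟨H⟩⟩ := hS
  have ha : a ∈ S := by simpa using hp 0
  have hb : b ∈ S := by simpa using hp 1
  let ka : Path a x := H.evalAt ⟨a, ha⟩
  let kb : Path b x := H.evalAt ⟨b, hb⟩
  have slide (r : Path a b) (hr : ∀ t, r t ∈ S) : (mk r).trans (mk kb) = mk ka := by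
    let r' : Path (⟨a, ha⟩ : S) ⟨b, hb⟩ :=
      ⟨⟨fun t ↦ ⟨r t, hr t⟩, by fun_prop⟩, by simp, by simp⟩
    exact (mk_map_trans_mk_evalAt H r').trans (Path.Homotopic.Quotient.trans_refl _)
  have cancel (r : Path a b) (hr : ∀ t, r t ∈ S) : mk r = (mk ka).trans (mk kb).symm := by
    rw [← slide r hr, pathClass_trans_symm_cancel_right]
  exact Path.Homotopic.Quotient.eq.1 ((cancel p hp).trans (cancel q hq).symm)

/-- The homotopy class `P` of paths has a representative inside `D`. -/
def DeformsInto (D : Set X) (P : Path.Homotopic.Quotient a b) : Prop :=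
  ∃ p : Path a b, (∀ t, p t ∈ D) ∧ mk p = P

theorem deformsInto_mk {p : Path a b} (hp : ∀ t, p t ∈ D) : DeformsInto D (mk p) :=
  ⟨p, hp, rfl⟩

namespace DeformsInto

theorem trans {P : Path.Homotopic.Quotient a b} {Q : Path.Homotopic.Quotient b c}
    (hP : DeformsInto D P) (hQ : DeformsInto D Q) : DeformsInto D (P.trans Q) := by
  obtain ⟨p, hp, rfl⟩ := hP
  obtain ⟨q, hq, rfl⟩ := hQ
  refine ⟨p.trans q, Set.range_subset_iff.1 ?_, Path.Homotopic.Quotient.mk_trans p q⟩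
  rw [Path.trans_range]
  exact Set.union_subset (Set.range_subset_iff.2 hp) (Set.range_subset_iff.2 hq)

theorem symm {P : Path.Homotopic.Quotient a b} (hP : DeformsInto D P) : DeformsInto D P.symm := by
  obtain ⟨p, hp, rfl⟩ := hP
  exact ⟨p.symm, fun t ↦ hp (σ t), Path.Homotopic.Quotient.mk_symm p⟩

theorem of_square (F : C(I × I, X)) {p : Path a b} {q : Path c d} (hp : ∀ t, F (0, t) = p t)
    (hq : ∀ t, F (1, t) = q t) (h₀ : ∀ s, F (s, 0) ∈ D) (h₁ : ∀ s, F (s, 1) ∈ D)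
    (h : DeformsInto D (mk q)) : DeformsInto D (mk p) := by
  obtain ⟨f, rfl, rfl⟩ := p
  obtain ⟨g, rfl, rfl⟩ := q
  set p : Path (f 0) (f 1) := ⟨f, rfl, rfl⟩
  set q : Path (g 0) (g 1) := ⟨g, rfl, rfl⟩
  let H : f.Homotopy g := ⟨F, hp, hq⟩
  let ι : Path (0 : I) 1 := ⟨.id I, rfl, rfl⟩
  have key : (mk p).trans (mk (H.evalAt 1)) = (mk (H.evalAt 0)).trans (mk q) :=
    mk_map_trans_mk_evalAt H ι
  have : mk p = ((mk (H.evalAt 0)).trans (mk q)).trans (mk (H.evalAt 1)).symm := by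
    rw [← key, pathClass_trans_symm_cancel_right]
  rw [this]
  exact ((deformsInto_mk h₀).trans h).trans (deformsInto_mk h₁).symm

end DeformsInto

theorem mk_subpath_trans_mk_subpath (p : Path a b) (r s t : I) :
    (mk (p.subpath r s)).trans (mk (p.subpath s t)) = mk (p.subpath r t) := by
  rw [← Path.Homotopic.Quotient.mk_trans]
  exact Path.Homotopic.Quotient.eq.2 ⟨Path.Homotopy.subpathTransSubpath p r s t⟩

theorem forall_path_class_of_local {G : ∀ {a b : X}, Path.Homotopic.Quotient a b → Prop}
    (trans : ∀ {a b c : X} {P : Path.Homotopic.Quotient a b} {Q : Path.Homotopic.Quotient b c},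
      G P → G Q → G (P.trans Q))
    (loc : ∀ x, ∃ U ∈ 𝓝 x, ∀ {a b : X} (p : Path a b), (∀ t, p t ∈ U) → G (mk p))
    (p : Path a b) : G (mk p) := by
  choose U hU hG using loc
  obtain ⟨t, ht0, ht, ⟨N, hN⟩, hsub⟩ := exists_monotone_Icc_subset_open_cover_unitInterval
    (c := fun s ↦ p ⁻¹' interior (U (p s))) (fun s ↦ isOpen_interior.preimage p.continuous)
    fun s _ ↦ Set.mem_iUnion.2 ⟨s, mem_interior_iff_mem_nhds.2 (hU _)⟩
  have piece (n : ℕ) : G (mk (p.subpath (t n) (t (n + 1)))) := by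
    obtain ⟨s, hs⟩ := hsub n
    refine hG (p s) _ (Set.range_subset_iff.1 ?_)
    rw [Path.range_subpath_of_le _ _ _ (ht n.le_succ)]
    exact Set.image_subset_iff.2 (hs.trans (Set.preimage_mono interior_subset))
  have initial (n : ℕ) : G (mk (p.subpath (t 0) (t (n + 1)))) := by
    induction n with
    | zero => exact piece 0
    | succ n ih => simpa only [mk_subpath_trans_mk_subpath] using trans ih (piece (n + 1))
  have h := initial N
  rw [ht0, hN _ N.le_succ, Path.subpath_zero_one] at h
  obtain ⟨f, rfl, rfl⟩ := p
  exact h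

theorem exists_split_of_enters {O : Set X} (hO : O ∈ 𝓝 a) (p : Path a b)
    (hp : ∀ s ≠ 0, p s ∈ D) :
    ∃ c ∈ D, ∃ q : Path a c, (∀ t, q t ∈ O) ∧
      ∃ T : Path.Homotopic.Quotient c b, DeformsInto D T ∧ mk p = (mk q).trans T := by
  obtain ⟨f, rfl, rfl⟩ := p
  set p : Path (f 0) (f 1) := ⟨f, rfl, rfl⟩
  have hpre : f ⁻¹' O ∈ 𝓝 (⊥ : I) := f.continuous.continuousAt hO
  obtain ⟨u, hu, huO⟩ := nhds_bot_basis.mem_iff.1 hpre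
  obtain ⟨s, hs, hsu⟩ := exists_between hu
  refine ⟨p s, hp s hs.ne', p.subpath 0 s, Set.range_subset_iff.1 ?_, mk (p.subpath s 1),
    deformsInto_mk (Set.range_subset_iff.1 ?_), ?_⟩
  · rw [Path.range_subpath_of_le _ _ _ unitInterval.nonneg']
    rintro _ ⟨r, hr, rfl⟩
    exact huO (hr.2.trans_lt hsu)
  · rw [Path.range_subpath_of_le _ _ _ unitInterval.le_one']
    rintro _ ⟨r, hr, rfl⟩
    exact hp r (hs.trans_le hr.1).ne'
  · rw [mk_subpath_trans_mk_subpath, Path.subpath_zero_one]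
    rfl

theorem DeformsInto.conj_of_local {a' b' : X} {U : Set X}
    (hU : ∀ {c d : X} (p : Path c d), c ∈ D → d ∈ D → (∀ t, p t ∈ U) → DeformsInto D (mk p))
    {p : Path a b} (hp : ∀ t, p t ∈ interior U) {α : Path a a'} (hα : ∀ s ≠ 0, α s ∈ D)
    {β : Path b b'} (hβ : ∀ s ≠ 0, β s ∈ D) :
    DeformsInto D (((mk α).symm.trans (mk p)).trans (mk β)) := by
  have ha : U ∈ 𝓝 a := mem_interior_iff_mem_nhds.1 (by simpa using hp 0)
  have hb : U ∈ 𝓝 b := mem_interior_iff_mem_nhds.1 (by simpa using hp 1)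
  obtain ⟨c, hc, α', hα', A, hA, hαA⟩ := exists_split_of_enters ha α hα
  obtain ⟨d, hd, β', hβ', B, hB, hβB⟩ := exists_split_of_enters hb β hβ
  have middle : DeformsInto D (mk ((α'.symm.trans p).trans β')) := by
    refine hU _ hc hd (Set.range_subset_iff.1 ?_)
    rw [Path.trans_range, Path.trans_range, Path.symm_range]
    exact Set.union_subset (Set.union_subset (Set.range_subset_iff.2 hα')
      (Set.range_subset_iff.2 fun t ↦ interior_subset (hp t))) (Set.range_subset_iff.2 hβ')
  have h := (hA.symm.trans middle).trans hB
  simpa only [hαA, hβB, pathClass_symm_trans, Path.Homotopic.Quotient.mk_trans,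
    Path.Homotopic.Quotient.mk_symm, Path.Homotopic.Quotient.trans_assoc] using h

theorem simplyConnectedSpace_of_nullhomotopic_inclusion [Nonempty X]
    (hD : (⟨Subtype.val, continuous_subtype_val⟩ : C(D, X)).Nullhomotopic)
    (enter : ∀ a : X, ∃ (b : X) (p : Path a b), ∀ s ≠ 0, p s ∈ D)
    (loc : ∀ x : X, ∃ U ∈ 𝓝 x, ∀ {a b : X} (p : Path a b), a ∈ D → b ∈ D → (∀ t, p t ∈ U) →
      DeformsInto D (mk p)) : SimplyConnectedSpace X := by
  choose e δ hδ using enter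
  have conj {a b : X} (p : Path a b) :
      DeformsInto D (((mk (δ a)).symm.trans (mk p)).trans (mk (δ b))) := by
    refine forall_path_class_of_local
      (G := fun {a b} P ↦ DeformsInto D (((mk (δ a)).symm.trans P).trans (mk (δ b))))
      (fun {a b c P Q} hP hQ ↦ ?_) (fun x ↦ ?_) p
    · simpa only [Path.Homotopic.Quotient.trans_assoc, pathClass_trans_symm_cancel_left] using
        hP.trans hQ
    · obtain ⟨U, hUx, hU⟩ := loc x
      exact ⟨interior U, interior_mem_nhds.2 hUx, fun p hp ↦ .conj_of_local hU hp (hδ _) (hδ _)⟩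
  refine simply_connected_iff_paths_homotopic'.2 ⟨⟨‹_›, fun a b ↦ ?_⟩, fun {a b} p q ↦ ?_⟩
  · obtain ⟨x, ⟨H⟩⟩ := hD
    have joined (a : X) : Joined a x :=
      ⟨(δ a).trans (H.evalAt ⟨e a, by simpa using hδ a 1 one_ne_zero⟩)⟩
    exact (joined a).trans (joined b).symm
  · obtain ⟨p', hp', hpp'⟩ := conj p
    obtain ⟨q', hq', hqq'⟩ := conj q
    have hpq := Path.Homotopic.Quotient.eq.2 (homotopic_of_nullhomotopic_inclusion hD hp' hq')
    rw [hpp', hqq', Path.Homotopic.Quotient.trans_assoc, Path.Homotopic.Quotient.trans_assoc]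
      at hpq
    have h := congrArg (fun P ↦ ((mk (δ a)).trans P).trans (mk (δ b)).symm) hpq
    simp only [pathClass_trans_symm_cancel_left, pathClass_trans_symm_cancel_right] at h
    exact Path.Homotopic.Quotient.eq.1 h

end PathClasses

theorem tendsto_clm_apply {𝕜 E F Y : Type*} [NontriviallyNormedField 𝕜] [NormedAddCommGroup E]
    [NormedSpace 𝕜 E] [NormedAddCommGroup F] [NormedSpace 𝕜 F] {l : Filter Y} {A : Y → E →L[𝕜] F}
    {B : E →L[𝕜] F} (hA : Tendsto A l (𝓝 B)) (x : E) :
    Tendsto (fun q : Y × E ↦ A q.1 q.2) (l ×ˢ 𝓝 x) (𝓝 (B x)) := by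
  have happly : Continuous fun q : (E →L[𝕜] F) × E ↦ q.1 q.2 := by fun_prop
  have h := hA.prodMap (tendsto_id (x := 𝓝 x))
  rw [← nhds_prod_eq] at h
  exact (happly.tendsto (B, x)).comp h

/-! ### The Chabauty topology -/

namespace ChabautyPoint

variable {n : ℕ}

instance : SetLike (ChabautyPoint n) (Euc n) :=
  ⟨fun Γ ↦ Γ.1, fun _ _ h ↦ Subtype.ext (SetLike.coe_injective h)⟩

instance : AddSubgroupClass (ChabautyPoint n) (Euc n) where
  add_mem {Γ} := Γ.1.add_mem
  zero_mem Γ := Γ.1.zero_mem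
  neg_mem {Γ} := Γ.1.neg_mem

theorem isClosed (Γ : ChabautyPoint n) : IsClosed (Γ : Set (Euc n)) := Γ.2

instance : Min (ChabautyPoint n) := ⟨fun Γ Δ ↦ ⟨Γ.1 ⊓ Δ.1, Γ.2.inter Δ.2⟩⟩

@[simp]
theorem mem_inf {Γ Δ : ChabautyPoint n} {x : Euc n} : x ∈ Γ ⊓ Δ ↔ x ∈ Γ ∧ x ∈ Δ := Iff.rfl

/-- A linear subspace, as a closed subgroup. -/
def ofSubmodule (V : Submodule ℝ (Euc n)) : ChabautyPoint n :=
  ⟨V.toAddSubgroup, V.closed_of_finiteDimensional⟩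

@[simp]
theorem mem_ofSubmodule {V : Submodule ℝ (Euc n)} {x : Euc n} : x ∈ ofSubmodule V ↔ x ∈ V :=
  Iff.rfl

/-- The preimage of a closed subgroup under a linear map. -/
def comap (A : Euc n →L[ℝ] Euc n) (Γ : ChabautyPoint n) : ChabautyPoint n :=
  ⟨Γ.1.comap A.toLinearMap.toAddMonoidHom, Γ.2.preimage A.continuous⟩

@[simp]
theorem mem_comap {A : Euc n →L[ℝ] Euc n} {Γ : ChabautyPoint n} {x : Euc n} :
    x ∈ comap A Γ ↔ A x ∈ Γ := Iff.rfl

theorem comap_one (Γ : ChabautyPoint n) : comap 1 Γ = Γ := rfl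

section Convergence

variable {Y : Type*} {l : Filter Y} {f : Y → ChabautyPoint n} {Γ : ChabautyPoint n}

theorem eventually_disjoint_nhds {K : Set (Euc n)} (hK : IsCompact K)
    (hΓ : Disjoint (Γ : Set (Euc n)) K) :
    ∀ᶠ Δ : ChabautyPoint n in 𝓝 Γ, Disjoint (Δ : Set (Euc n)) K := by
  simp only [Set.disjoint_iff_inter_eq_empty] at hΓ ⊢
  exact IsOpen.mem_nhds (TopologicalSpace.isOpen_generateFrom_of_mem (Or.inl ⟨K, hK, rfl⟩)) hΓ

theorem eventually_exists_mem_nhds {x : Euc n} (hx : x ∈ Γ) {U : Set (Euc n)} (hU : U ∈ 𝓝 x) :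
    ∀ᶠ Δ in 𝓝 Γ, ∃ z ∈ Δ, z ∈ U := by
  have hopen : IsOpen {Δ : ChabautyPoint n | ((Δ.1 : Set (Euc n)) ∩ interior U).Nonempty} :=
    TopologicalSpace.isOpen_generateFrom_of_mem (Or.inr ⟨interior U, isOpen_interior, rfl⟩)
  filter_upwards [hopen.mem_nhds ⟨x, hx, mem_interior_iff_mem_nhds.2 hU⟩] with Δ ⟨z, hz, hzU⟩
  exact ⟨z, hz, interior_subset hzU⟩

/-- The lower limit of the groups `f y` along `l`: the points approximated by points of `f y`. -/
def lowerLimit (l : Filter Y) (f : Y → ChabautyPoint n) : AddSubmonoid (Euc n) where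
  carrier := {x | ∀ U ∈ 𝓝 x, ∀ᶠ y in l, ∃ z ∈ f y, z ∈ U}
  zero_mem' _ hU := .of_forall fun y ↦ ⟨0, zero_mem (f y), mem_of_mem_nhds hU⟩
  add_mem' {x x'} hx hx' U hU := by
    obtain ⟨W, hW, W', hW', hWU⟩ := mem_nhds_prod_iff.1 ((continuous_add.tendsto (x, x')) hU)
    filter_upwards [hx W hW, hx' W' hW'] with y ⟨z, hz, hzW⟩ ⟨z', hz', hzW'⟩
    exact ⟨z + z', add_mem hz hz', hWU (Set.mk_mem_prod hzW hzW')⟩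

theorem tendsto_nhds_iff : Tendsto f l (𝓝 Γ) ↔
    (∀ x ∉ Γ, ∀ᶠ q in l ×ˢ 𝓝 x, q.2 ∉ f q.1) ∧ ∀ x ∈ Γ, x ∈ lowerLimit l f := by
  refine ⟨fun h ↦ ⟨fun x hx ↦ ?_, fun x hx U hU ↦ h.eventually (eventually_exists_mem_nhds hx hU)⟩,
    fun ⟨avoid, meet⟩ ↦ TopologicalSpace.tendsto_nhds_generateFrom_iff.2 ?_⟩
  · obtain ⟨K, hKx, hKΓ, hK⟩ := local_compact_nhds (Γ.isClosed.isOpen_compl.mem_nhds hx)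
    filter_upwards [(h.eventually (eventually_disjoint_nhds hK
      (Set.subset_compl_iff_disjoint_left.1 hKΓ))).prod_mk hKx] with q hq hqf
    exact hq.1.notMem_of_mem_left hqf hq.2
  · rintro S (⟨K, hK, rfl⟩ | ⟨U, hU, rfl⟩) hS
    · have hmiss : ∀ᶠ q in l ×ˢ 𝓝ˢ K, q.2 ∉ f q.1 := by
        rw [hK.prod_nhdsSet_eq_biSup]
        simp only [eventually_iSup]
        exact fun x hx ↦ avoid x fun hxΓ ↦ Set.notMem_empty x (hS.subset ⟨hxΓ, hx⟩)
      filter_upwards [hmiss.curry] with y hy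
      exact Set.eq_empty_of_forall_notMem fun x ⟨hx, hxK⟩ ↦ hy.self_of_nhdsSet x hxK hx
    · obtain ⟨x, hx, hxU⟩ := hS
      exact meet x hx U (hU.mem_nhds hxU)

theorem eventually_exists_mem (hf : Tendsto f l (𝓝 Γ)) {x : Euc n} (hx : x ∈ Γ)
    {p : Y × Euc n → Prop} (hp : ∀ᶠ q in l ×ˢ 𝓝 x, p q) : ∀ᶠ y in l, ∃ z ∈ f y, p (y, z) := by
  obtain ⟨pY, hpY, pE, hpE, hpp⟩ := eventually_prod_iff.1 hp
  filter_upwards [hpY, (tendsto_nhds_iff.1 hf).2 x hx _ hpE] with y hy ⟨z, hz, hzE⟩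
  exact ⟨z, hz, hpp hy hzE⟩

theorem tendsto_comap {A : Y → Euc n →L[ℝ] Euc n} {B : Euc n →L[ℝ] Euc n}
    (hf : Tendsto f l (𝓝 Γ)) (hA : Tendsto A l (𝓝 B)) (hB : IsUnit B) :
    Tendsto (fun y ↦ comap (A y) (f y)) l (𝓝 (comap B Γ)) := by
  refine tendsto_nhds_iff.2 ⟨fun x hx ↦ ?_, fun x hx U hU ↦ ?_⟩
  · exact (tendsto_fst.prodMk (tendsto_clm_apply hA x)).eventually ((tendsto_nhds_iff.1 hf).1 _ hx)
  · obtain ⟨u, rfl⟩ := hB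
    have hinv := tendsto_clm_apply ((NormedRing.inverse_continuousAt u).tendsto.comp hA) (u.val x)
    have hux : Ring.inverse u.val (u.val x) = x := by
      exact congr($(Ring.inverse_mul_cancel u.val u.isUnit) x)
    rw [hux] at hinv
    filter_upwards [eventually_exists_mem hf hx (hinv.eventually hU), hA.eventually u.nhds]
      with y ⟨z, hz, hzU⟩ hy
    refine ⟨_, ?_, hzU⟩
    have hyz : A y (Ring.inverse (A y) z) = z := by
      exact congr($(Ring.mul_inverse_cancel (A y) hy) z)
    rwa [mem_comap, Function.comp_apply, hyz]

end Convergence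

end ChabautyPoint

/-! ### Discrete groups and transverse expansion -/

section Stretch

variable {E : Type*} [NormedAddCommGroup E] [InnerProductSpace ℝ E] {V : Submodule ℝ E}
  [V.HasOrthogonalProjection]

/-- The map scaling `V` by `a` and its orthogonal complement by `b`. -/
def stretch (V : Submodule ℝ E) [V.HasOrthogonalProjection] (a b : ℝ) : E →L[ℝ] E :=
  a • V.starProjection + b • (1 - V.starProjection)

theorem stretch_apply (a b : ℝ) (x : E) :
    stretch V a b x = a • V.starProjection x + b • (x - V.starProjection x) := rfl

theorem starProjection_idem (x : E) : V.starProjection (V.starProjection x) = V.starProjection x :=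
  Submodule.starProjection_eq_self_iff.2 (V.starProjection_apply_mem x)

theorem starProjection_stretch (a b : ℝ) (x : E) :
    V.starProjection (stretch V a b x) = a • V.starProjection x := by
  simp [stretch_apply, starProjection_idem]

theorem sub_starProjection_stretch (a b : ℝ) (x : E) :
    stretch V a b x - V.starProjection (stretch V a b x) = b • (x - V.starProjection x) := by
  rw [starProjection_stretch, stretch_apply, add_sub_cancel_left]

theorem stretch_sub_starProjection (a b : ℝ) (x : E) :
    stretch V a b (x - V.starProjection x) = b • (x - V.starProjection x) := by
  simp [stretch_apply, starProjection_idem]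

theorem sub_starProjection_eq_zero_iff {x : E} : x - V.starProjection x = 0 ↔ x ∈ V := by
  rw [sub_eq_zero, eq_comm, Submodule.starProjection_eq_self_iff]

theorem eventually_norm_sub_starProjection_lt {x : E} (hx : x ∈ V) {R : ℝ} (hR : 0 < R) :
    ∀ᶠ z in 𝓝 x, ‖z - V.starProjection z‖ < R := by
  have hcont : Continuous fun z ↦ ‖z - V.starProjection z‖ := by fun_prop
  refine hcont.continuousAt.eventually_lt continuousAt_const ?_
  rwa [sub_starProjection_eq_zero_iff.2 hx, norm_zero]

theorem stretch_stretch (a b c d : ℝ) (x : E) :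
    stretch V a b (stretch V c d x) = stretch V (a * c) (b * d) x := by
  rw [stretch_apply, starProjection_stretch, stretch_apply, stretch_apply, add_sub_cancel_left,
    smul_smul, smul_smul]

theorem stretch_one_one : stretch V 1 1 = 1 := by
  simp [stretch]

theorem stretch_one_of_mem (b : ℝ) {x : E} (hx : x ∈ V) : stretch V 1 b x = x := by
  rw [stretch_apply, sub_starProjection_eq_zero_iff.2 hx, Submodule.starProjection_eq_self_iff.2 hx,
    smul_zero, one_smul, add_zero]

theorem isUnit_stretch {a b : ℝ} (ha : a ≠ 0) (hb : b ≠ 0) : IsUnit (stretch V a b) := by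
  refine isUnit_iff_exists.2 ⟨stretch V a⁻¹ b⁻¹, ?_, ?_⟩ <;>
  · ext x
    simp [stretch_stretch, ha, hb, stretch_one_one]

theorem tendsto_stretch {Y : Type*} {l : Filter Y} {a b : Y → ℝ} {a₀ b₀ : ℝ}
    (ha : Tendsto a l (𝓝 a₀)) (hb : Tendsto b l (𝓝 b₀)) :
    Tendsto (fun y ↦ stretch V (a y) (b y)) l (𝓝 (stretch V a₀ b₀)) :=
  (ha.smul_const _).add (hb.smul_const _)

end Stretch

theorem discreteTopology_iff_eventually_eq_zero {G : Type*} [AddGroup G] [TopologicalSpace G]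
    [IsTopologicalAddGroup G] {Γ : AddSubgroup G} :
    DiscreteTopology Γ ↔ ∀ᶠ x in 𝓝 (0 : G), x ∈ Γ → x = 0 := by
  rw [discreteTopology_iff_isOpen_singleton_zero, isOpen_singleton_iff_nhds_eq_pure,
    ← (pure_le_nhds (0 : Γ)).ge_iff_eq', le_pure_iff, nhds_subtype_eq_comap]
  refine (eventually_comap (p := (· = (0 : Γ)))).trans (eventually_congr (.of_forall fun x ↦
    ⟨fun h hx ↦ congrArg Subtype.val (h ⟨x, hx⟩ rfl), ?_⟩))
  rintro h a rfl
  exact Subtype.ext (h a.2)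

namespace ChabautyPoint

variable {n : ℕ} {Γ : ChabautyPoint n} {V : Submodule ℝ (Euc n)} {R : ℝ}

/-- The set of discrete subgroups of `ℝⁿ`. -/
def discrete (n : ℕ) : Set (ChabautyPoint n) := {Γ | DiscreteTopology Γ.1}

theorem mem_discrete_iff : Γ ∈ discrete n ↔ ∀ᶠ x in 𝓝 0, x ∈ Γ → x = 0 :=
  discreteTopology_iff_eventually_eq_zero

theorem eventually_map_eq_zero (hΓ : Γ ∈ discrete n) (A : Euc n →L[ℝ] Euc n) :
    ∀ᶠ x in 𝓝 0, A x ∈ Γ → A x = 0 :=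
  (A.continuous.tendsto' 0 0 A.map_zero).eventually (mem_discrete_iff.1 hΓ)

theorem comap_mem_discrete (hΓ : Γ ∈ discrete n) {A : Euc n →L[ℝ] Euc n} (hA : IsUnit A) :
    comap A Γ ∈ discrete n := by
  obtain ⟨B, hB⟩ := hA.exists_left_inv
  refine mem_discrete_iff.2 ?_
  filter_upwards [eventually_map_eq_zero hΓ A] with x hx hxΓ
  calc
    x = B (A x) := congr($hB.symm x)
    _ = 0 := by rw [hx hxΓ, map_zero]

/-- Every point of `Γ` at distance less than `R` from `V` lies in `V`. -/
def HasGap (V : Submodule ℝ (Euc n)) (R : ℝ) (Γ : ChabautyPoint n) : Prop :=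
  ∀ z ∈ Γ, ‖z - V.starProjection z‖ < R → z ∈ V

/-- The group `Γ` with the directions transverse to `V` scaled by `u⁻¹`; for `u = 0` only `Γ ∩ V`
is left, the limit when `Γ` has a gap around `V`. -/
def expand (V : Submodule ℝ (Euc n)) (u : ℝ) (Γ : ChabautyPoint n) : ChabautyPoint n :=
  comap (stretch V 1 u) Γ ⊓ ofSubmodule (⨅ _ : u = 0, V)

theorem mem_expand {u : ℝ} {x : Euc n} :
    x ∈ expand V u Γ ↔ stretch V 1 u x ∈ Γ ∧ (u = 0 → x ∈ V) := by
  simp [expand, Submodule.mem_iInf]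

theorem mem_expand_of_mem {u : ℝ} {x : Euc n} (hx : x ∈ V) : x ∈ expand V u Γ ↔ x ∈ Γ := by
  simp [mem_expand, stretch_one_of_mem u hx, hx]

theorem expand_one : expand V 1 Γ = Γ :=
  SetLike.ext fun x ↦ by simp [mem_expand, stretch_one_one]

theorem expand_zero : expand V 0 Γ = Γ ⊓ ofSubmodule V :=
  SetLike.ext fun x ↦ by
    by_cases hx : x ∈ V
    · simp [mem_expand_of_mem hx, hx]
    · simp [mem_expand, hx]

theorem expand_of_ne_zero {u : ℝ} (hu : u ≠ 0) : expand V u Γ = comap (stretch V 1 u) Γ :=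
  SetLike.ext fun x ↦ by simp [mem_expand, hu]

theorem inf_mem_discrete (hΓ : Γ ∈ discrete n) (Δ : ChabautyPoint n) : Γ ⊓ Δ ∈ discrete n := by
  refine mem_discrete_iff.2 ?_
  filter_upwards [mem_discrete_iff.1 hΓ] with x hx hxΓ using hx hxΓ.1

theorem expand_mem_discrete (hΓ : Γ ∈ discrete n) (u : ℝ) : expand V u Γ ∈ discrete n := by
  rcases eq_or_ne u 0 with rfl | hu
  · exact expand_zero ▸ inf_mem_discrete hΓ _
  · exact expand_of_ne_zero hu ▸ comap_mem_discrete hΓ (isUnit_stretch one_ne_zero hu)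

theorem HasGap.eventually_notMem_expand {Y : Type*} {l : Filter Y} {f : Y → ChabautyPoint n}
    {u : Y → ℝ} (hu : Tendsto u l (𝓝 0)) (hR : 0 < R) (gap : ∀ᶠ y in l, HasGap V R (f y))
    {x : Euc n} (hx : x ∉ V) : ∀ᶠ q in l ×ˢ 𝓝 x, q.2 ∉ expand V (u q.1) (f q.1) := by
  have hV : ∀ᶠ x' in 𝓝 x, x' ∉ V := V.closed_of_finiteDimensional.isOpen_compl.mem_nhds hx
  have hsmall : Tendsto (fun q : Y × Euc n ↦ u q.1 • (q.2 - V.starProjection q.2)) (l ×ˢ 𝓝 x)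
      (𝓝 0) := by
    simpa using tendsto_clm_apply (hu.smul_const (1 - V.starProjection)) x
  filter_upwards [gap.prod_mk hV, hsmall.norm.eventually (gt_mem_nhds (by simpa using hR))]
    with q ⟨hq, hqV⟩ hqR hqf
  obtain ⟨hqΓ, hq0⟩ := mem_expand.1 hqf
  have hmem := hq _ hqΓ (by rwa [sub_starProjection_stretch])
  rw [← sub_starProjection_eq_zero_iff (V := V), sub_starProjection_stretch, smul_eq_zero,
    sub_starProjection_eq_zero_iff] at hmem
  exact hqV (hmem.elim hq0 id)

theorem tendsto_expand {Y : Type*} {l : Filter Y} {f : Y → ChabautyPoint n} {u : Y → ℝ} {u₀ : ℝ}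
    (hf : Tendsto f l (𝓝 Γ)) (hu : Tendsto u l (𝓝 u₀)) (hR : 0 < R)
    (gap : ∀ᶠ y in l, HasGap V R (f y)) :
    Tendsto (fun y ↦ expand V (u y) (f y)) l (𝓝 (expand V u₀ Γ)) := by
  have hstretch : Tendsto (fun y ↦ stretch V 1 (u y)) l (𝓝 (stretch V 1 u₀)) :=
    tendsto_stretch tendsto_const_nhds hu
  rcases eq_or_ne u₀ 0 with rfl | hu₀
  · refine tendsto_nhds_iff.2 ⟨fun x hx ↦ ?_, fun x hx U hU ↦ ?_⟩
    · by_cases hxV : x ∈ V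
      · rw [mem_expand_of_mem hxV, ← stretch_one_of_mem 0 hxV] at hx
        have h := (tendsto_fst.prodMk (tendsto_clm_apply hstretch x)).eventually
          ((tendsto_nhds_iff.1 hf).1 _ hx)
        filter_upwards [h] with q hq hqf using hq (mem_expand.1 hqf).1
      · exact HasGap.eventually_notMem_expand hu hR gap hxV
    · rw [expand_zero] at hx
      filter_upwards [gap, (tendsto_nhds_iff.1 hf).2 x hx.1 _
        (inter_mem hU (eventually_norm_sub_starProjection_lt hx.2 hR))] with y hy ⟨z, hz, hzU, hzR⟩
      exact ⟨z, (mem_expand_of_mem (hy z hz hzR)).2 hz, hzU⟩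
  · rw [expand_of_ne_zero hu₀]
    refine (tendsto_comap hf hstretch (isUnit_stretch one_ne_zero hu₀)).congr' ?_
    filter_upwards [hu.eventually_ne hu₀] with y hy using (expand_of_ne_zero hy).symm

end ChabautyPoint

/-! ### Cocompact subgroups of a subspace -/

namespace ChabautyPoint

variable {n : ℕ} {Γ : ChabautyPoint n} {V : Submodule ℝ (Euc n)}

/-- The group `Γ` scaled by `u` along `V`. Since `0⁻¹ = 0`, for `u = 0` it is
`{x | x - P x ∈ Γ}` with `P` the projection onto `V`, which is the limit as `u → 0` when `P` maps
`Γ` into itself and `Γ ∩ V` spans `V`. -/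
def shrink (V : Submodule ℝ (Euc n)) (u : ℝ) (Γ : ChabautyPoint n) : ChabautyPoint n :=
  comap (stretch V u⁻¹ 1) Γ

theorem mem_shrink {u : ℝ} {x : Euc n} : x ∈ shrink V u Γ ↔ stretch V u⁻¹ 1 x ∈ Γ := Iff.rfl

theorem shrink_one : shrink V 1 Γ = Γ :=
  SetLike.ext fun x ↦ by simp [mem_shrink, stretch_one_one]

theorem mem_shrink_zero {x : Euc n} : x ∈ shrink V 0 Γ ↔ x - V.starProjection x ∈ Γ := by
  simp [mem_shrink, stretch_apply]

theorem shrink_mem_discrete (hΓ : Γ ∈ discrete n) {u : ℝ} (hu : u ≠ 0) :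
    shrink V u Γ ∈ discrete n :=
  comap_mem_discrete hΓ (isUnit_stretch (inv_ne_zero hu) one_ne_zero)

theorem mem_shrink_of_mem {u : ℝ} {x : Euc n} (hx : x ∈ V) : x ∈ shrink V u Γ ↔ u⁻¹ • x ∈ Γ := by
  rw [mem_shrink, stretch_apply, sub_starProjection_eq_zero_iff.2 hx,
    Submodule.starProjection_eq_self_iff.2 hx, smul_zero, add_zero]

section Convergence

variable {Y : Type*} {l : Filter Y} {f : Y → ChabautyPoint n} {u : Y → ℝ}

theorem smul_mem_lowerLimit_shrink (hf : Tendsto f l (𝓝 Γ)) (hu : Tendsto u l (𝓝 0))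
    (hproj : ∀ᶠ y in l, ∀ x ∈ f y, V.starProjection x ∈ f y) {x : Euc n}
    (hx : x ∈ Γ) (hxV : x ∈ V) (t : ℝ) :
    t • x ∈ lowerLimit l fun y ↦ shrink V (u y) (f y) := by
  intro U hU
  have hfract : Tendsto (fun y ↦ t - u y * Int.fract (t * (u y)⁻¹)) l (𝓝 t) := by
    have hbdd : IsBoundedUnder (· ≤ ·) l (norm ∘ fun y ↦ Int.fract (t * (u y)⁻¹)) :=
      isBoundedUnder_of ⟨1, fun y ↦ by
        simpa only [Function.comp_apply, Real.norm_of_nonneg (Int.fract_nonneg _)] using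
          (Int.fract_lt_one _).le⟩
    simpa using tendsto_const_nhds.sub (hu.zero_mul_isBoundedUnder_le hbdd)
  have hlim := tendsto_clm_apply (hfract.smul_const V.starProjection) x
  rw [smul_apply, Submodule.starProjection_eq_self_iff.2 hxV] at hlim
  filter_upwards [eventually_exists_mem hf hx (hlim.eventually hU), hproj] with y ⟨z, hz, hzU⟩ hy
  refine ⟨_, (mem_shrink_of_mem (V.smul_mem _ (V.starProjection_apply_mem z))).2 ?_, hzU⟩
  have hfloor : (u y)⁻¹ * (t - u y * Int.fract (t * (u y)⁻¹)) = ⌊t * (u y)⁻¹⌋ := by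
    rcases eq_or_ne (u y) 0 with h | h
    · simp [h]
    · rw [mul_sub, inv_mul_cancel_left₀ h, mul_comm, Int.self_sub_fract]
  rw [smul_smul, hfloor, Int.cast_smul_eq_zsmul]
  exact zsmul_mem (hy z hz) _

theorem mem_lowerLimit_shrink (hf : Tendsto f l (𝓝 Γ)) (hu : Tendsto u l (𝓝 0))
    (hproj : ∀ᶠ y in l, ∀ x ∈ f y, V.starProjection x ∈ f y)
    (hspan : V ≤ Submodule.span ℝ (Γ ⊓ ofSubmodule V : ChabautyPoint n)) {x : Euc n}
    (hx : x ∈ V) : x ∈ lowerLimit l fun y ↦ shrink V (u y) (f y) := by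
  suffices h : ∀ t : ℝ, t • x ∈ lowerLimit l fun y ↦ shrink V (u y) (f y) by
    simpa using h 1
  have hxspan := hspan hx
  clear hx
  induction hxspan using Submodule.span_induction with
  | mem x hx => exact smul_mem_lowerLimit_shrink hf hu hproj hx.1 hx.2
  | zero => simp
  | add x y _ _ hx hy => exact fun t ↦ smul_add t x y ▸ add_mem (hx t) (hy t)
  | smul c x _ hx => exact fun t ↦ smul_smul t c x ▸ hx (t * c)

theorem tendsto_shrink {u₀ : ℝ} (hf : Tendsto f l (𝓝 Γ)) (hu : Tendsto u l (𝓝 u₀))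
    (hproj : ∀ᶠ y in l, ∀ x ∈ f y, V.starProjection x ∈ f y)
    (hspan : V ≤ Submodule.span ℝ (Γ ⊓ ofSubmodule V : ChabautyPoint n)) :
    Tendsto (fun y ↦ shrink V (u y) (f y)) l (𝓝 (shrink V u₀ Γ)) := by
  rcases eq_or_ne u₀ 0 with rfl | hu₀
  · have hQ := fun x ↦ tendsto_clm_apply (l := l) (tendsto_const_nhds (x := 1 - V.starProjection)) x
    have hQQ (x : Euc n) : (1 - V.starProjection : Euc n →L[ℝ] Euc n) (x - V.starProjection x) =
        x - V.starProjection x := by simp [starProjection_idem]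
    refine tendsto_nhds_iff.2 ⟨fun x hx ↦ ?_, fun x hx ↦ ?_⟩
    · rw [mem_shrink_zero] at hx
      filter_upwards [(tendsto_fst.prodMk (hQ x)).eventually ((tendsto_nhds_iff.1 hf).1 _ hx),
        hproj.prod_inl _] with q hq hqproj hqf
      rw [mem_shrink] at hqf
      have h := sub_mem hqf (hqproj _ hqf)
      rw [sub_starProjection_stretch, one_smul] at h
      exact hq h
    · rw [← add_sub_cancel (V.starProjection x) x]
      refine add_mem (mem_lowerLimit_shrink hf hu hproj hspan (V.starProjection_apply_mem x))
        fun U hU ↦ ?_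
      rw [mem_shrink_zero] at hx
      have hQx := hQ (x - V.starProjection x)
      rw [hQQ] at hQx
      filter_upwards [eventually_exists_mem hf hx (hQx.eventually hU), hproj]
        with y ⟨z, hz, hzU⟩ hy
      refine ⟨z - V.starProjection z, ?_, hzU⟩
      rw [mem_shrink, stretch_sub_starProjection, one_smul]
      exact sub_mem hz (hy z hz)
  · exact tendsto_comap hf (tendsto_stretch (hu.inv₀ hu₀) tendsto_const_nhds)
      (isUnit_stretch (inv_ne_zero hu₀) one_ne_zero)

end Convergence

/-- The closed subgroups of `V` with compact quotient, equivalently those spanning `V`. -/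
def cocompactIn (V : Submodule ℝ (Euc n)) : Set (ChabautyPoint n) :=
  {Γ | Submodule.span ℝ (Γ : Set (Euc n)) = V}

theorem nullhomotopic_cocompactIn (V : Submodule ℝ (Euc n)) :
    (⟨Subtype.val, continuous_subtype_val⟩ : C(cocompactIn V, ChabautyPoint n)).Nullhomotopic := by
  have hle (Γ : cocompactIn V) {x : Euc n} (hx : x ∈ Γ.1) : x ∈ V :=
    Γ.2.le (Submodule.subset_span hx)
  have hcont : Continuous fun q : I × cocompactIn V ↦ shrink V (1 - q.1 : ℝ) q.2.1 := by
    refine continuous_iff_continuousAt.2 fun q ↦ tendsto_shrink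
      (continuous_subtype_val.comp continuous_snd).continuousAt ?_ ?_ ?_
    · have h : Continuous fun q : I × cocompactIn V ↦ (1 - q.1 : ℝ) := by fun_prop
      exact h.continuousAt
    · refine .of_forall fun q x hx ↦ ?_
      rwa [Submodule.starProjection_eq_self_iff.2 (hle q.2 hx)]
    · exact q.2.2.ge.trans (Submodule.span_mono fun x hx ↦ ⟨hx, hle q.2 hx⟩)
  have hzero (Γ : cocompactIn V) : shrink V 0 Γ.1 = ofSubmodule V := SetLike.ext fun x ↦ by
    rw [mem_shrink_zero, mem_ofSubmodule]
    refine ⟨fun hx ↦ ?_, fun hx ↦ sub_starProjection_eq_zero_iff.2 hx ▸ zero_mem Γ.1⟩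
    rw [← sub_add_cancel x (V.starProjection x)]
    exact add_mem (hle Γ hx) (V.starProjection_apply_mem x)
  exact ⟨ofSubmodule V, ⟨⟨_, hcont⟩, fun Γ ↦ by simp [shrink_one], fun Γ ↦ by simp [hzero]⟩⟩

end ChabautyPoint

/-! ### Lattices -/

section MatrixPaths

variable {ι : Type*} [Fintype ι] [DecidableEq ι]

theorem joinedIn_isUnit_diagonal {D : ι → ℝ} (hD : ∀ i, D i ≠ 0) :
    ∃ ε : ι → ℤˣ, JoinedIn {M : Matrix ι ι ℝ | IsUnit M} (Matrix.diagonal D)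
      (Matrix.diagonal fun i ↦ ((ε i : ℤ) : ℝ)) := by
  have hsign (i : ι) : ∃ ε : ℤˣ, 0 < D i * ((ε : ℤ) : ℝ) := by
    rcases (hD i).lt_or_gt with h | h
    · exact ⟨-1, by simpa using h⟩
    · exact ⟨1, by simpa using h⟩
  choose ε hε using hsign
  refine ⟨ε, JoinedIn.ofLine
    (f := fun t ↦ Matrix.diagonal fun i ↦ (1 - t) * D i + t * ((ε i : ℤ) : ℝ))
    (by fun_prop) (by simp) (by simp) ?_⟩
  rintro _ ⟨t, ⟨ht₀, ht₁⟩, rfl⟩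
  simp only [Set.mem_ofPred_eq, Matrix.isUnit_diagonal, Pi.isUnit_iff, isUnit_iff_ne_zero]
  intro i hi
  have hsq : ((ε i : ℤ) : ℝ) * ((ε i : ℤ) : ℝ) = 1 := by exact_mod_cast Int.units_coe_mul_self (ε i)
  have hzero : (1 - t) * (D i * ((ε i : ℤ) : ℝ)) + t = 0 := by
    linear_combination ((ε i : ℤ) : ℝ) * hi - t * hsq
  rcases ht₀.eq_or_lt with rfl | ht
  · linarith [hε i]
  · linarith [mul_nonneg (sub_nonneg.2 ht₁) (hε i).le]

theorem joinedIn_isUnit_transvection (t : Matrix.TransvectionStruct ι ℝ) :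
    JoinedIn {M : Matrix ι ι ℝ | IsUnit M} t.toMatrix 1 := by
  refine JoinedIn.ofLine (f := fun s ↦ Matrix.transvection t.i t.j ((1 - s) • t.c)) ?_
    (by simp [Matrix.TransvectionStruct.toMatrix]) (by simp) ?_
  · simp only [Matrix.transvection, ← Matrix.smul_single]
    exact (continuous_const.add (by fun_prop)).continuousOn
  · rintro _ ⟨s, -, rfl⟩
    simp [Matrix.isUnit_iff_isUnit_det, Matrix.det_transvection_of_ne _ _ t.hij]

theorem exists_joinedIn_isUnit_diagonal_units {M : Matrix ι ι ℝ} (hM : IsUnit M) :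
    ∃ ε : ι → ℤˣ, JoinedIn {M : Matrix ι ι ℝ | IsUnit M} M
      (Matrix.diagonal fun i ↦ ((ε i : ℤ) : ℝ)) := by
  refine Matrix.diagonal_transvection_induction_of_det_ne_zero
    (fun M ↦ ∃ ε : ι → ℤˣ, JoinedIn {M : Matrix ι ι ℝ | IsUnit M} M
      (Matrix.diagonal fun i ↦ ((ε i : ℤ) : ℝ))) M
    (M.isUnit_iff_isUnit_det.1 hM).ne_zero (fun D hD ↦ ?_) (fun t ↦ ?_) ?_
  · refine joinedIn_isUnit_diagonal fun i ↦ ?_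
    rw [Matrix.det_diagonal] at hD
    exact Finset.prod_ne_zero_iff.1 hD i (Finset.mem_univ i)
  · exact ⟨1, by simpa using joinedIn_isUnit_transvection t⟩
  · rintro A B - - ⟨ε, hA⟩ ⟨ε', hB⟩
    refine ⟨ε * ε', ?_⟩
    have h := (hA.mul hB).mono (V := {M | IsUnit M})
      (Set.mul_subset_iff.2 fun _ hM _ hN ↦ IsUnit.mul hM hN)
    simpa only [Matrix.diagonal_mul_diagonal, Pi.mul_apply, Units.val_mul, Int.cast_mul] using h

end MatrixPaths

section Extend

variable {E : Type*} [NormedAddCommGroup E] [InnerProductSpace ℝ E] {V : Submodule ℝ E}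
  [FiniteDimensional ℝ V]

/-- The extension of an endomorphism of `V` by the identity of the orthogonal complement. -/
def extend (V : Submodule ℝ E) [FiniteDimensional ℝ V] : Module.End ℝ V →* (E →L[ℝ] E) where
  toFun T :=
    V.subtypeL ∘L LinearMap.toContinuousLinearMap (T : V →ₗ[ℝ] V) ∘L V.orthogonalProjectionOnto +
      (1 - V.starProjection)
  map_one' := by ext x; simp [End.one_eq_id]
  map_mul' S T := by
    ext x
    have hP : V.orthogonalProjectionOnto (V.starProjection x) = V.orthogonalProjectionOnto x :=
      V.orthogonalProjectionOnto_mem_subspace_eq_self _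
    simp [hP, starProjection_idem]

theorem extend_apply_coe (T : Module.End ℝ V) (v : V) : extend V T v = T v := by
  simp [extend]

theorem continuous_extend_toLin {ι : Type*} [Fintype ι] [DecidableEq ι] (b : Basis ι ℝ V) :
    Continuous fun M : Matrix ι ι ℝ ↦ extend V (Matrix.toLinAlgEquiv b M) := by
  have h : Continuous fun M : Matrix ι ι ℝ ↦
      LinearMap.toContinuousLinearMap (Matrix.toLinAlgEquiv b M) :=
    (LinearMap.toContinuousLinearMap.toLinearMap ∘ₗ
      (Matrix.toLinAlgEquiv b).toLinearMap).continuous_of_finiteDimensional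
  exact ((continuous_const.clm_comp (h.clm_comp continuous_const)).add continuous_const)

end Extend

namespace ChabautyPoint

variable {n : ℕ} {V : Submodule ℝ (Euc n)} {ι : Type*} [Finite ι]

theorem isClosed_map_subtype {L : AddSubgroup V} (hL : IsClosed (L : Set V)) :
    IsClosed (L.map V.subtype.toAddMonoidHom : Set (Euc n)) :=
  (V.isClosedEmbedding_subtypeL V.closed_of_finiteDimensional).isClosedMap _ hL

/-- The lattice in `V` generated by a basis of `V`. -/
def zspan (b : Basis ι ℝ V) : ChabautyPoint n :=
  ⟨(Submodule.span ℤ (Set.range b)).toAddSubgroup.map V.subtype.toAddMonoidHom,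
    isClosed_map_subtype AddSubgroup.isClosed_of_discrete⟩

theorem mem_zspan {b : Basis ι ℝ V} {x : Euc n} :
    x ∈ zspan b ↔ ∃ v ∈ Submodule.span ℤ (Set.range b), (v : Euc n) = x := Iff.rfl

theorem zspan_mem_discrete (b : Basis ι ℝ V) : zspan b ∈ discrete n := by
  have h : ∀ᶠ v in 𝓝 (0 : V), v ∈ (Submodule.span ℤ (Set.range b)).toAddSubgroup → v = 0 :=
    discreteTopology_iff_eventually_eq_zero.1 inferInstance
  refine mem_discrete_iff.2 ?_
  filter_upwards [(V.orthogonalProjectionOnto.continuous.tendsto' 0 0 (map_zero _)).eventually h]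
  rintro _ hv ⟨v, hvb, rfl⟩
  simp_all

theorem zspan_mem_cocompactIn (b : Basis ι ℝ V) : zspan b ∈ cocompactIn V := by
  have hcoe : (zspan b : Set (Euc n)) = V.subtype '' Submodule.span ℤ (Set.range b) := rfl
  rw [cocompactIn, Set.mem_ofPred_eq, hcoe, Submodule.span_image, ZSpan.span_top,
    Submodule.map_subtype_top]

theorem extend_mem_zspan (e : V ≃ₗ[ℝ] V) {b : Basis ι ℝ V} {x : Euc n} (hx : x ∈ zspan b) :
    extend V e x ∈ zspan (b.map e) := by
  obtain ⟨v, hv, rfl⟩ := hx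
  refine ⟨e v, ?_, (extend_apply_coe _ v).symm⟩
  have h := Submodule.mem_map_of_mem (f := (e : V →ₗ[ℝ] V).restrictScalars ℤ) hv
  rw [Submodule.map_span, ← Set.range_comp] at h
  exact h

theorem comap_extend_zspan (e : V ≃ₗ[ℝ] V) (b : Basis ι ℝ V) :
    comap (extend V e) (zspan b) = zspan (b.map e.symm) := by
  refine SetLike.ext fun x ↦ ⟨fun hx ↦ ?_, fun hx ↦ ?_⟩
  · have hmul : (e.symm : Module.End ℝ V) * (e : Module.End ℝ V) = 1 := by ext; simp
    have hinv : extend V e.symm * extend V e = 1 := by rw [← map_mul, hmul, map_one]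
    have hx' : extend V e.symm (extend V e x) = x := congr($hinv x)
    exact hx' ▸ extend_mem_zspan e.symm (mem_comap.1 hx)
  · have hb : (b.map e.symm).map e = b := by ext; simp
    exact hb ▸ extend_mem_zspan e hx

theorem zspan_eq_of_units_smul {b c : Basis ι ℝ V} {ε : ι → ℤˣ} (h : ∀ i, c i = ε i • b i) :
    zspan c = zspan b := by
  have hspan : Submodule.span ℤ (Set.range c) = Submodule.span ℤ (Set.range b) := by
    refine Submodule.span_eq_span ?_ ?_ <;> rintro _ ⟨i, rfl⟩
    · rw [h]
      exact Submodule.smul_mem _ ((ε i : ℤˣ) : ℤ) (Submodule.subset_span ⟨i, rfl⟩)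
    · rw [← inv_smul_smul (ε i) (b i), ← h]
      exact Submodule.smul_mem _ (((ε i)⁻¹ : ℤˣ) : ℤ) (Submodule.subset_span ⟨i, rfl⟩)
  exact SetLike.ext fun x ↦ by simp only [mem_zspan, hspan]

section MatrixAction

variable {ι : Type*} [Fintype ι] [DecidableEq ι]

theorem exists_comap_extend_toLin (b : Basis ι ℝ V) {M : Matrix ι ι ℝ} (hM : IsUnit M) :
    ∃ c : Basis ι ℝ V, (∀ i, Matrix.toLinAlgEquiv b M (c i) = b i) ∧
      comap (extend V (Matrix.toLinAlgEquiv b M)) (zspan b) = zspan c := by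
  obtain ⟨e, he⟩ : ∃ e : V ≃ₗ[ℝ] V, (e : End ℝ V) = Matrix.toLinAlgEquiv b M :=
    ⟨.ofBijective _ ((End.isUnit_iff _).1 (hM.map (Matrix.toLinAlgEquiv b))), rfl⟩
  refine ⟨b.map e.symm, fun i ↦ ?_, he ▸ comap_extend_zspan e b⟩
  simp [← he]

theorem continuousOn_comap_extend_toLin (b : Basis ι ℝ V) (Γ : ChabautyPoint n) :
    ContinuousOn (fun M : Matrix ι ι ℝ ↦ comap (extend V (Matrix.toLinAlgEquiv b M)) Γ)
      {M | IsUnit M} := fun _ hM ↦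
  tendsto_comap tendsto_const_nhds ((continuous_extend_toLin b).continuousWithinAt)
    ((IsUnit.map (Matrix.toLinAlgEquiv b) hM).map (extend V))

theorem zspan_eq_of_diagonal_units {b c : Basis ι ℝ V} {ε : ι → ℤˣ}
    (hε : IsUnit (Matrix.diagonal fun i ↦ ((ε i : ℤ) : ℝ)))
    (h : ∀ i, Matrix.toLinAlgEquiv b (Matrix.diagonal fun i ↦ ((ε i : ℤ) : ℝ)) (c i) = b i) :
    zspan c = zspan b := by
  refine zspan_eq_of_units_smul (ε := ε) fun i ↦
    ((End.isUnit_iff _).1 (hε.map (Matrix.toLinAlgEquiv b))).1 ?_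
  have hself : Matrix.toLinAlgEquiv b (Matrix.diagonal fun i ↦ ((ε i : ℤ) : ℝ)) (b i) =
      ε i • b i := by
    simp [Matrix.toLinAlgEquiv_self, Matrix.diagonal_apply, Units.smul_def,
      Int.cast_smul_eq_zsmul]
  rw [h, Units.smul_def, map_zsmul, hself, ← Units.smul_def, smul_smul, Int.units_mul_self,
    one_smul]

end MatrixAction

theorem joinedIn_zspan (b c : Basis ι ℝ V) :
    JoinedIn (cocompactIn V ∩ discrete n) (zspan b) (zspan c) := by
  classical
  cases nonempty_fintype ι
  let f (M : Matrix ι ι ℝ) : ChabautyPoint n :=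
    comap (extend V (Matrix.toLinAlgEquiv b M)) (zspan b)
  let e : V ≃ₗ[ℝ] V := c.equiv b (.refl ι)
  let M : Matrix ι ι ℝ := (Matrix.toLinAlgEquiv b).symm e
  have hM : IsUnit M := ((End.isUnit_iff _).2 e.bijective).map (Matrix.toLinAlgEquiv b).symm
  have hfM : f M = zspan c := by
    have hc : b.map e.symm = c := by ext i; simp [e]
    simp only [f, M, AlgEquiv.apply_symm_apply]
    rw [comap_extend_zspan, hc]
  obtain ⟨ε, hε⟩ := exists_joinedIn_isUnit_diagonal_units hM
  have hfε : f (Matrix.diagonal fun i ↦ ((ε i : ℤ) : ℝ)) = zspan b := by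
    obtain ⟨c', hc', h⟩ := exists_comap_extend_toLin b hε.target_mem
    exact h.trans (zspan_eq_of_diagonal_units hε.target_mem hc')
  have h := (hε.map_continuousOn (continuousOn_comap_extend_toLin b (zspan b))).mono
    (V := cocompactIn V ∩ discrete n) <| by
      rintro _ ⟨M', hM', rfl⟩
      obtain ⟨b', -, hb'⟩ := exists_comap_extend_toLin b hM'
      exact (congrArg (· ∈ cocompactIn V ∩ discrete n) hb').mpr
        ⟨zspan_mem_cocompactIn b', zspan_mem_discrete b'⟩
  exact hfε ▸ hfM ▸ h.symm

theorem exists_basis_zspan_eq {Γ : ChabautyPoint n} (hV : Γ ∈ cocompactIn V)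
    (hΓ : Γ ∈ discrete n) : ∃ b : Basis (Fin (finrank ℝ V)) ℝ V, zspan b = Γ := by
  have hle {x : Euc n} (hx : x ∈ Γ) : x ∈ V := hV.le (Submodule.subset_span hx)
  let L : Submodule ℤ V := (Γ.1.comap V.subtype.toAddMonoidHom).toIntSubmodule
  have hdisc : DiscreteTopology L := by
    have h : ∀ᶠ v in 𝓝 (0 : V), v ∈ L.toAddSubgroup → v = 0 := by
      filter_upwards [(continuous_subtype_val.tendsto' (0 : V) 0 rfl).eventually
        (mem_discrete_iff.1 hΓ)] with v hv hvL using Subtype.ext (hv hvL)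
    exact discreteTopology_iff_eventually_eq_zero.2 h
  have hcoe : V.subtype '' L = Γ :=
    Set.ext fun x ↦ ⟨by rintro ⟨v, hv, rfl⟩; exact hv, fun hx ↦ ⟨⟨x, hle hx⟩, hx, rfl⟩⟩
  have : IsZLattice ℝ L := by
    refine ⟨Submodule.map_injective_of_injective V.subtype_injective ?_⟩
    rw [← Submodule.span_image, hcoe, Submodule.map_subtype_top]
    exact hV
  have := ZLattice.module_finite ℝ L
  have := ZLattice.module_free ℝ L
  let b := finBasisOfFinrankEq ℤ L (ZLattice.rank ℝ L)
  refine ⟨b.ofZLatticeBasis ℝ L, SetLike.coe_injective ?_⟩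
  rw [← hcoe]
  exact congr(V.subtype '' $(b.ofZLatticeBasis_span ℝ))

theorem joinedIn_cocompactIn_inter_discrete {Γ Δ : ChabautyPoint n}
    (hΓ : Γ ∈ cocompactIn V ∩ discrete n) (hΔ : Δ ∈ cocompactIn V ∩ discrete n) :
    JoinedIn (cocompactIn V ∩ discrete n) Γ Δ := by
  obtain ⟨b, rfl⟩ := exists_basis_zspan_eq hΓ.1 hΓ.2
  obtain ⟨c, rfl⟩ := exists_basis_zspan_eq hΔ.1 hΔ.2
  exact joinedIn_zspan b c

theorem deformsInto_discrete_of_cocompactIn {Γ Δ : ChabautyPoint n} (hΓ : Γ ∈ discrete n)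
    (hΔ : Δ ∈ discrete n) (p : Path Γ Δ) (hp : ∀ t, p t ∈ cocompactIn V) :
    DeformsInto (discrete n) (mk p) := by
  have hq := joinedIn_cocompactIn_inter_discrete ⟨p.source ▸ hp 0, hΓ⟩ ⟨p.target ▸ hp 1, hΔ⟩
  exact ⟨hq.somePath, fun t ↦ (hq.somePath_mem t).2,
    Path.Homotopic.Quotient.eq.2 <| homotopic_of_nullhomotopic_inclusion
      (nullhomotopic_cocompactIn V) (fun t ↦ (hq.somePath_mem t).1) hp⟩

end ChabautyPoint

/-! ### The linear part -/

namespace ChabautyPoint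

variable {n : ℕ} {Γ A : ChabautyPoint n} {V : Submodule ℝ (Euc n)}

/-- The largest linear subspace contained in `Γ`. -/
def linearPart (Γ : ChabautyPoint n) : Submodule ℝ (Euc n) where
  carrier := {x | ∀ t : ℝ, t • x ∈ Γ}
  zero_mem' t := by simp
  add_mem' {x y} hx hy t := smul_add t x y ▸ add_mem (hx t) (hy t)
  smul_mem' c x hx t := smul_smul t c x ▸ hx (t * c)

theorem mem_of_mem_linearPart {x : Euc n} (hx : x ∈ linearPart Γ) : x ∈ Γ :=
  one_smul ℝ x ▸ hx 1

theorem mem_linearPart_of_tendsto {Y : Type*} {l : Filter Y} [l.NeBot] {x : Y → Euc n} {w : Euc n}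
    (hx : Tendsto x l (𝓝 0)) (hΓ : ∀ᶠ y in l, x y ∈ Γ)
    (hw : Tendsto (fun y ↦ ‖x y‖⁻¹ • x y) l (𝓝 w)) : w ∈ linearPart Γ := by
  intro t
  have hfract : Tendsto (fun y ↦ Int.fract (t * ‖x y‖⁻¹) • x y) l (𝓝 0) := by
    have hbdd : IsBoundedUnder (· ≤ ·) l (norm ∘ fun y ↦ Int.fract (t * ‖x y‖⁻¹)) :=
      isBoundedUnder_of ⟨1, fun y ↦ by
        simpa only [Function.comp_apply, Real.norm_of_nonneg (Int.fract_nonneg _)] using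
          (Int.fract_lt_one _).le⟩
    exact hbdd.smul_tendsto_zero hx
  have hlim := (hw.const_smul t).sub hfract
  rw [sub_zero] at hlim
  refine Γ.isClosed.mem_of_tendsto hlim ?_
  filter_upwards [hΓ] with y hy
  rw [smul_smul, ← sub_smul, Int.self_sub_fract, Int.cast_smul_eq_zsmul]
  exact zsmul_mem hy _

theorem mem_discrete_of_linearPart_eq_bot (h : linearPart Γ = ⊥) : Γ ∈ discrete n := by
  rw [mem_discrete_iff]
  by_contra hfreq
  simp only [not_eventually, Classical.not_imp] at hfreq
  have : (𝓝 0 ⊓ 𝓟 {x | x ∈ Γ ∧ x ≠ 0}).NeBot := frequently_mem_iff_neBot.1 hfreq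
  let l := Ultrafilter.of (𝓝 0 ⊓ 𝓟 {x | x ∈ Γ ∧ x ≠ 0})
  have hl : (l : Filter (Euc n)) ≤ 𝓝 0 ⊓ 𝓟 {x | x ∈ Γ ∧ x ≠ 0} := Ultrafilter.of_le _
  have hmem : ∀ᶠ x in (l : Filter (Euc n)), x ∈ Γ ∧ x ≠ 0 :=
    (hl.trans inf_le_right) (mem_principal_self _)
  obtain ⟨w, hw, hlw⟩ := (isCompact_sphere (0 : Euc n) 1).ultrafilter_le_nhds
    (l.map fun x ↦ ‖x‖⁻¹ • x) <| by
      refine le_principal_iff.2 (Filter.mem_map.2 ?_)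
      filter_upwards [hmem] with x hx
      simp [norm_smul, hx.2]
  have hwΓ : w ∈ linearPart Γ :=
    mem_linearPart_of_tendsto (hl.trans inf_le_left) (hmem.mono fun _ ↦ And.left) hlw
  rw [h, Submodule.mem_bot] at hwΓ
  simp [hwΓ] at hw

theorem linearPart_eq_bot_of_mem_discrete (h : Γ ∈ discrete n) : linearPart Γ = ⊥ := by
  refine (Submodule.eq_bot_iff _).2 fun x hx ↦ ?_
  have hlim : Tendsto (fun t : ℝ ↦ t • x) (𝓝[≠] 0) (𝓝 0) :=
    (Continuous.tendsto' (by fun_prop) 0 0 (zero_smul ℝ x)).mono_left nhdsWithin_le_nhds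
  obtain ⟨t, ht, ht₀⟩ := ((hlim.eventually (mem_discrete_iff.1 h)).and self_mem_nhdsWithin).exists
  exact (smul_eq_zero.1 (ht (hx t))).resolve_left ht₀

theorem sub_starProjection_mem (h : V ≤ linearPart Γ) {x : Euc n} :
    x - V.starProjection x ∈ Γ ↔ x ∈ Γ := by
  rw [sub_eq_add_neg, add_mem_cancel_right]
  exact neg_mem (mem_of_mem_linearPart (h (V.starProjection_apply_mem x)))

theorem exists_hasGap_linearPart (Γ : ChabautyPoint n) : ∃ ρ > 0, HasGap (linearPart Γ) ρ Γ := by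
  set V := linearPart Γ with hV
  have hdisc : Γ ⊓ ofSubmodule Vᗮ ∈ discrete n := by
    refine mem_discrete_of_linearPart_eq_bot ((Submodule.eq_bot_iff _).2 fun x hx ↦ ?_)
    exact Submodule.disjoint_def.1 V.orthogonal_disjoint x (fun t ↦ (hx t).1)
      (mem_of_mem_linearPart hx).2
  obtain ⟨ρ, hρ, h⟩ := Metric.eventually_nhds_iff.1 (mem_discrete_iff.1 hdisc)
  refine ⟨ρ, hρ, fun z hz hzρ ↦ sub_starProjection_eq_zero_iff.1 (h (by simpa using hzρ) ?_)⟩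
  exact ⟨(sub_starProjection_mem hV.le).2 hz, V.sub_starProjection_mem_orthogonal z⟩

/-- The closed subgroup whose points have their component along `V` in `A` and their component
orthogonal to `V` in `Γ`. -/
def glue (V : Submodule ℝ (Euc n)) (A Γ : ChabautyPoint n) : ChabautyPoint n :=
  comap V.starProjection A ⊓ comap (1 - V.starProjection) Γ

theorem mem_glue {x : Euc n} :
    x ∈ glue V A Γ ↔ V.starProjection x ∈ A ∧ x - V.starProjection x ∈ Γ := Iff.rfl

theorem mem_glue_of_mem {x : Euc n} (hx : x ∈ V) : x ∈ glue V A Γ ↔ x ∈ A := by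
  simp [mem_glue, Submodule.starProjection_eq_self_iff.2 hx]

theorem glue_mem_discrete {ρ : ℝ} (hA : A ∈ discrete n) (hρ : 0 < ρ) (hΓ : HasGap V ρ Γ) :
    glue V A Γ ∈ discrete n := by
  refine mem_discrete_iff.2 ?_
  filter_upwards [eventually_map_eq_zero hA V.starProjection,
    eventually_norm_sub_starProjection_lt V.zero_mem hρ] with x hxA hxρ ⟨hx, hx'⟩
  have hPx : V.starProjection x = 0 := hxA hx
  have hxV : x - V.starProjection x ∈ V := hΓ _ hx' (by simpa [starProjection_idem] using hxρ)
  rw [hPx, sub_zero] at hxV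
  rwa [Submodule.starProjection_eq_self_iff.2 hxV] at hPx

theorem shrink_zero_glue (hV : V ≤ linearPart Γ) : shrink V 0 (glue V A Γ) = Γ :=
  SetLike.ext fun x ↦ by
    simp [mem_shrink_zero, mem_glue, starProjection_idem, sub_starProjection_mem hV]

theorem exists_path_enters_discrete (Γ : ChabautyPoint n) :
    ∃ Δ, ∃ p : Path Γ Δ, ∀ s ≠ 0, p s ∈ discrete n := by
  let V := linearPart Γ
  obtain ⟨ρ, hρ, gap⟩ := exists_hasGap_linearPart Γ
  let A := zspan (finBasis ℝ V)
  have hA : Submodule.span ℝ (A : Set (Euc n)) = V := zspan_mem_cocompactIn _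
  have hcont : Continuous fun s : I ↦ shrink V s (glue V A Γ) := by
    refine continuous_iff_continuousAt.2 fun s ↦ tendsto_shrink tendsto_const_nhds
      continuous_subtype_val.continuousAt (.of_forall fun _ x hx ↦ ?_) ?_
    · exact (mem_glue_of_mem (V.starProjection_apply_mem x)).2 hx.1
    · refine hA.ge.trans (Submodule.span_mono fun x hx ↦ ?_)
      have hxV : x ∈ V := hA.le (Submodule.subset_span hx)
      exact ⟨(mem_glue_of_mem hxV).2 hx, hxV⟩
  refine ⟨_, ⟨⟨_, hcont⟩, shrink_zero_glue le_rfl, rfl⟩, fun s hs ↦ ?_⟩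
  exact shrink_mem_discrete (glue_mem_discrete (zspan_mem_discrete _) hρ gap)
    (by simpa using hs)

end ChabautyPoint

/-! ### Straightening nearby groups -/

section Slope

variable {E : Type*} [NormedAddCommGroup E] [InnerProductSpace ℝ E] {V : Submodule ℝ E}
  [V.HasOrthogonalProjection] {N T : E →L[ℝ] E}

/-- `N` sends `V` to its orthogonal complement and vanishes there, so that `1 + N` is a shear taking
`V` to the graph of `N` over `V`. -/
structure IsSlope (V : Submodule ℝ E) [V.HasOrthogonalProjection] (N : E →L[ℝ] E) : Prop where
  starProjection_mul : V.starProjection * N = 0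
  mul_starProjection : N * V.starProjection = N

namespace IsSlope

theorem starProjection_apply (hN : IsSlope V N) (x : E) : V.starProjection (N x) = 0 :=
  congr($hN.starProjection_mul x)

theorem apply_starProjection (hN : IsSlope V N) (x : E) : N (V.starProjection x) = N x :=
  congr($hN.mul_starProjection x)

theorem smul (hN : IsSlope V N) (c : ℝ) : IsSlope V (c • N) :=
  ⟨by rw [mul_smul_comm, hN.starProjection_mul, smul_zero],
    by rw [smul_mul_assoc, hN.mul_starProjection]⟩

theorem mul_self (hN : IsSlope V N) : N * N = 0 := by
  rw [← hN.mul_starProjection, mul_assoc, ← mul_assoc V.starProjection, hN.starProjection_mul,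
    zero_mul, mul_zero]

theorem one_add_mul_one_sub (hN : IsSlope V N) : (1 + N) * (1 - N) = 1 := by
  rw [add_mul, mul_sub, mul_sub, hN.mul_self, mul_one, one_mul, mul_one]
  abel

theorem isUnit_one_add (hN : IsSlope V N) : IsUnit (1 + N) :=
  isUnit_iff_exists.2 ⟨1 - N, hN.one_add_mul_one_sub, by
    rw [sub_mul, mul_add, mul_add, hN.mul_self, mul_one, one_mul, mul_one]
    abel⟩

theorem starProjection_one_add_apply (hN : IsSlope V N) (x : E) :
    V.starProjection ((1 + N) x) = V.starProjection x := by
  simp [hN.starProjection_apply]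

theorem apply_eq_sum (hN : IsSlope V N) {ι : Type*} [Fintype ι] (c : Basis ι ℝ V) (x : E) :
    N x = ∑ i, c.repr (V.orthogonalProjectionOnto x) i • N (c i) := by
  have h := congr(N (V.subtype $(c.sum_repr (V.orthogonalProjectionOnto x))))
  simp only [map_sum, map_smul] at h
  exact (hN.apply_starProjection x).symm.trans h.symm

end IsSlope

/-- The slope of the image of `T` over `V`, which is a graph over `V` when the operator inverted
here, equal to `P * T` on `V` and to the identity on its orthogonal complement, is invertible. -/
def imageSlope (V : Submodule ℝ E) [V.HasOrthogonalProjection] (T : E →L[ℝ] E) : E →L[ℝ] E :=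
  (1 - V.starProjection) * T * Ring.inverse (V.starProjection * T + (1 - V.starProjection))

theorem imageSlope_mul (hT : T * V.starProjection = T)
    (hH : IsUnit (V.starProjection * T + (1 - V.starProjection))) :
    imageSlope V T * (V.starProjection * T) = (1 - V.starProjection) * T := by
  have hP : V.starProjection * V.starProjection = V.starProjection :=
    V.isIdempotentElem_starProjection
  have hHP : (V.starProjection * T + (1 - V.starProjection)) * V.starProjection =
      V.starProjection * T := by
    rw [add_mul, sub_mul, one_mul, hP, sub_self, add_zero, mul_assoc, hT]
  calc
    _ = (1 - V.starProjection) * T * (Ring.inverse (V.starProjection * T + (1 - V.starProjection))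
        * (V.starProjection * T + (1 - V.starProjection))) * V.starProjection := by
      rw [mul_assoc _ (_ * _) V.starProjection, mul_assoc (Ring.inverse _), hHP, imageSlope,
        mul_assoc]
    _ = (1 - V.starProjection) * T := by
      rw [Ring.inverse_mul_cancel _ hH, mul_one, mul_assoc, hT]

theorem isSlope_imageSlope (hT : T * V.starProjection = T)
    (hH : IsUnit (V.starProjection * T + (1 - V.starProjection))) :
    IsSlope V (imageSlope V T) := by
  have hP : V.starProjection * V.starProjection = V.starProjection :=
    V.isIdempotentElem_starProjection
  obtain ⟨u, hu⟩ := hH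
  have hcomm : Commute V.starProjection u := by
    rw [hu]
    simp only [Commute, SemiconjBy, mul_add, add_mul, mul_sub, sub_mul, mul_one, one_mul,
      ← mul_assoc, hP]
    rw [mul_assoc, hT]
  refine ⟨?_, ?_⟩
  · rw [imageSlope, ← mul_assoc, ← mul_assoc, mul_sub, mul_one, hP, sub_self, zero_mul, zero_mul]
  · rw [imageSlope, ← hu, Ring.inverse_unit, mul_assoc, ← hcomm.units_inv_right.eq, ← mul_assoc,
      mul_assoc _ T, hT]

section FiniteDimensional

variable [FiniteDimensional ℝ V] {ι : Type*} (b : Basis ι ℝ V)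

/-- The map sending `b i` to `v i` and vanishing on the orthogonal complement of `V`. -/
def constrProjection (v : ι → E) : E →L[ℝ] E :=
  (b.constr ℝ v).toContinuousLinearMap ∘L V.orthogonalProjectionOnto

theorem constrProjection_apply_basis (v : ι → E) (i : ι) : constrProjection b v (b i) = v i := by
  simp only [constrProjection, ContinuousLinearMap.comp_apply,
    Submodule.orthogonalProjectionOnto_mem_subspace_eq_self, LinearMap.coe_toContinuousLinearMap',
    Basis.constr_basis]

theorem constrProjection_basis : constrProjection b (fun i ↦ (b i : E)) = V.starProjection := by
  have h : b.constr ℝ (fun i ↦ (b i : E)) = V.subtype := b.ext fun i ↦ b.constr_basis ℝ _ i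
  rw [constrProjection, h]
  rfl

theorem constrProjection_mul_starProjection (v : ι → E) :
    constrProjection b v * V.starProjection = constrProjection b v := by
  ext x
  exact congr(b.constr ℝ v $(Subtype.ext (starProjection_idem x)))

theorem continuous_constrProjection : Continuous (constrProjection b) := by
  have := FiniteDimensional.fintypeBasisIndex b
  have hsum : constrProjection b = fun v ↦ ∑ i, ContinuousLinearMap.smulRightL ℝ E E
      ((b.coord i).toContinuousLinearMap ∘L V.orthogonalProjectionOnto) (v i) := by
    ext v x
    simp [constrProjection, Basis.constr_apply_fintype]
  rw [hsum]
  fun_prop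

theorem exists_basis_imageSlope {v : ι → E} (hH : IsUnit (V.starProjection * constrProjection b v +
    (1 - V.starProjection))) : ∃ c : Basis ι ℝ V, ∀ i, (c i : E) = V.starProjection (v i) ∧
      (1 + imageSlope V (constrProjection b v)) (c i) = v i := by
  set T := constrProjection b v
  obtain ⟨H', hH'⟩ := hH.exists_left_inv
  let L : V →ₗ[ℝ] V :=
    V.orthogonalProjectionOnto.toLinearMap ∘ₗ (T : E →ₗ[ℝ] E) ∘ₗ V.subtype
  have hL (x : V) : (L x : E) = (V.starProjection * T + (1 - V.starProjection)) x := by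
    simp [L]
  have hinj : Function.Injective L := fun x y hxy ↦ Subtype.ext <| calc
    (x : E) = H' ((V.starProjection * T + (1 - V.starProjection)) x) := congr($hH'.symm x)
    _ = H' ((V.starProjection * T + (1 - V.starProjection)) y) := by rw [← hL, hxy, hL]
    _ = y := congr($hH' y)
  have hc (i : ι) : (b.map (.ofInjectiveEndo L hinj) i : E) = V.starProjection (v i) := by
    simp [L, T, constrProjection_apply_basis]
  refine ⟨b.map (.ofInjectiveEndo L hinj), fun i ↦ ⟨hc i, ?_⟩⟩
  have h := congr($(imageSlope_mul (constrProjection_mul_starProjection b v) hH) (b i))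
  simp only [mul_apply_eq_comp, sub_apply, one_apply_eq_self,
    constrProjection_apply_basis] at h
  rw [hc, add_apply, h]
  simp

theorem eventually_exists_slope [CompleteSpace E] :
    ∀ᶠ v in 𝓝 fun i ↦ (b i : E), ∃ N, IsSlope V N ∧ ‖N‖ ≤ 1 ∧ ∃ c : Basis ι ℝ V,
      ∀ i, (c i : E) = V.starProjection (v i) ∧ (1 + N) (c i) = v i := by
  have hcont : Continuous fun v ↦ V.starProjection * constrProjection b v +
      (1 - V.starProjection) := by
    have := continuous_constrProjection b
    fun_prop
  have hone : V.starProjection * constrProjection b (fun i ↦ (b i : E)) +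
      (1 - V.starProjection) = 1 := by
    rw [constrProjection_basis, V.isIdempotentElem_starProjection, add_sub_cancel]
  have hH := hcont.tendsto' _ 1 hone
  have hN : Tendsto (fun v ↦ imageSlope V (constrProjection b v)) (𝓝 fun i ↦ (b i : E)) (𝓝 0) := by
    have hinv := (NormedRing.inverse_continuousAt (1 : (E →L[ℝ] E)ˣ)).tendsto.comp hH
    have hT := (continuous_constrProjection b).tendsto' _ _ (constrProjection_basis b)
    have h := (hT.const_mul (1 - V.starProjection)).mul hinv
    rwa [sub_mul, one_mul, V.isIdempotentElem_starProjection, sub_self, zero_mul] at h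
  have hN₁ := hN.norm.eventually_le_const (u := 1) (by simp)
  filter_upwards [hH.eventually (Units.nhds 1), hN₁] with v hv hvN
  exact ⟨_, isSlope_imageSlope (constrProjection_mul_starProjection b v) hv, hvN,
    exists_basis_imageSlope b hv⟩

end FiniteDimensional

end Slope

theorem exists_nat_mul_mem_Icc {s R : ℝ} (hs : 0 < s) (hsR : s < R) :
    ∃ m : ℕ, m * s ∈ Set.Icc R (2 * R) := by
  refine ⟨⌈R / s⌉₊, (div_le_iff₀ hs).1 (Nat.le_ceil _), ?_⟩
  calc
    (⌈R / s⌉₊ : ℝ) * s ≤ (R / s + 1) * s := by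
      gcongr
      exact (Nat.ceil_lt_add_one (div_pos (hs.trans hsR) hs).le).le
    _ = R + s := by field_simp
    _ ≤ 2 * R := by linarith

theorem norm_sub_starProjection_le {E : Type*} [NormedAddCommGroup E] [InnerProductSpace ℝ E]
    (V : Submodule ℝ E) [V.HasOrthogonalProjection] (x : E) : ‖x - V.starProjection x‖ ≤ ‖x‖ := by
  rw [← V.starProjection_orthogonal_val]
  exact Vᗮ.norm_starProjection_apply_le x

theorem exists_basis_sum_norm_lt {V : Type*} [NormedAddCommGroup V] [NormedSpace ℝ V]
    [FiniteDimensional ℝ V] {ε : ℝ} (hε : 0 < ε) :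
    ∃ b : Basis (Fin (finrank ℝ V)) ℝ V, ∑ i, ‖b i‖ < ε := by
  let b := finBasis ℝ V
  have hlim : Tendsto (fun a : ℝ ↦ ∑ i, ‖a • b i‖) (𝓝[≠] 0) (𝓝 0) :=
    (Continuous.tendsto' (by fun_prop) 0 0 (by simp)).mono_left nhdsWithin_le_nhds
  obtain ⟨a, ha, ha₀⟩ := ((hlim.eventually_lt_const hε).and self_mem_nhdsWithin).exists
  exact ⟨b.isUnitSMul fun _ ↦ IsUnit.mk0 a ha₀, by simpa only [Basis.isUnitSMul_apply] using ha⟩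

namespace ChabautyPoint

variable {n : ℕ} {Γ : ChabautyPoint n} {V : Submodule ℝ (Euc n)} {R : ℝ} {N : Euc n →L[ℝ] Euc n}

theorem exists_mem_norm_sub_le {ι : Type*} [Fintype ι] {c : Basis ι ℝ V}
    (hc : ∀ i, (c i : Euc n) ∈ Γ) (x : V) : ∃ g : V, (g : Euc n) ∈ Γ ∧ ‖x - g‖ ≤ ∑ i, ‖c i‖ := by
  refine ⟨ZSpan.floor c x, ?_, ZSpan.norm_fract_le c x⟩
  simp only [ZSpan.floor, Submodule.coe_sum, Submodule.coe_smul, Basis.restrictScalars_apply]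
  exact sum_mem fun i _ ↦ zsmul_mem (hc i) _

/-- A compact set separating the points close to `V` from those far away, near the origin. -/
def collar (V : Submodule ℝ (Euc n)) (R : ℝ) : Set (Euc n) :=
  {x | ‖V.starProjection x‖ ≤ R ∧ ‖x - V.starProjection x‖ ∈ Set.Icc (R / 2) (3 * R)}

theorem isCompact_collar : IsCompact (collar V R) := by
  refine isCompact_of_isClosed_isBounded ?_ ?_
  · exact (isClosed_le V.starProjection.continuous.norm continuous_const).inter
      (isClosed_Icc.preimage (continuous_id.sub V.starProjection.continuous).norm)
  · refine isBounded_iff_forall_norm_le.2 ⟨R + 3 * R, fun x hx ↦ ?_⟩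
    calc
      ‖x‖ = ‖V.starProjection x + (x - V.starProjection x)‖ := by rw [add_sub_cancel]
      _ ≤ R + 3 * R := norm_add_le_of_le hx.1 hx.2.2

theorem HasGap.disjoint_collar {ρ : ℝ} (hΓ : HasGap V ρ Γ) (hR : 0 < R) (hRρ : 3 * R < ρ) :
    Disjoint (Γ : Set (Euc n)) (collar V R) := by
  refine Set.disjoint_left.2 fun x hx hxR ↦ ?_
  have hxV := hΓ x hx (hxR.2.2.trans_lt hRρ)
  have h := hxR.2.1
  rw [sub_starProjection_eq_zero_iff.2 hxV, norm_zero] at h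
  linarith

theorem one_add_apply_mem_collar (hN : IsSlope V N) (hN₁ : ‖N‖ ≤ 1) {w : Euc n}
    (hP : ‖V.starProjection w‖ ≤ R / 4)
    (hQ : ‖w - V.starProjection w‖ ∈ Set.Icc R (2 * R)) : (1 + N) w ∈ collar V R := by
  have hNw : ‖N w‖ ≤ R / 4 := by
    rw [← hN.apply_starProjection]
    exact (N.le_of_opNorm_le_of_le hN₁ hP).trans_eq (one_mul _)
  have hQ' : (1 + N) w - V.starProjection ((1 + N) w) = w - V.starProjection w + N w := by
    rw [hN.starProjection_one_add_apply, add_apply, one_apply_eq_self, add_sub_right_comm]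
  have hupper := norm_add_le (w - V.starProjection w) (N w)
  have hlower := norm_sub_norm_le (w - V.starProjection w) (-N w)
  have hR := (norm_nonneg _).trans hP
  rw [sub_neg_eq_add, norm_neg] at hlower
  refine ⟨?_, ?_, ?_⟩
  · rw [hN.starProjection_one_add_apply]
    linarith
  all_goals rw [hQ']; linarith [hQ.1, hQ.2]

theorem hasGap_comap_one_add (hN : IsSlope V N) (hN₁ : ‖N‖ ≤ 1) {ι : Type*} [Fintype ι]
    {c : Basis ι ℝ V} (hc : ∀ i, (c i : Euc n) ∈ comap (1 + N) Γ) (hcR : ∑ i, ‖c i‖ ≤ R / 4)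
    (hΓ : Disjoint (Γ : Set (Euc n)) (collar V R)) : HasGap V R (comap (1 + N) Γ) := by
  intro z hz hzR
  by_contra hzV
  obtain ⟨m, hm⟩ := exists_nat_mul_mem_Icc
    (norm_pos_iff.2 (mt sub_starProjection_eq_zero_iff.1 hzV)) hzR
  obtain ⟨g, hg, hgR⟩ := exists_mem_norm_sub_le hc (V.orthogonalProjectionOnto (m • z))
  have hw : m • z - g ∈ comap (1 + N) Γ := sub_mem (nsmul_mem hz m) hg
  have hPw : V.starProjection (m • z - g) = V.starProjection (m • z) - g := by
    rw [map_sub, Submodule.starProjection_eq_self_iff.2 g.2]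
  have hQw : m • z - g - V.starProjection (m • z - g) = (m : ℝ) • (z - V.starProjection z) := by
    rw [hPw, sub_sub_sub_cancel_right, map_nsmul, ← smul_sub, ← Nat.cast_smul_eq_nsmul ℝ]
  refine hΓ.notMem_of_mem_left hw (one_add_apply_mem_collar hN hN₁ ?_ ?_)
  · exact hPw ▸ hgR.trans hcR
  · rwa [hQw, norm_smul, Real.norm_natCast]

/-- The small shear `1 + N` straightens `Γ` along `V`: the group `comap (1 + N) Γ` has no point
near `V` but outside it, and contains a basis of `V` made of short vectors. -/
structure IsStraightenedBy (V : Submodule ℝ (Euc n)) (R : ℝ) (Γ : ChabautyPoint n)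
    (N : Euc n →L[ℝ] Euc n) : Prop extends IsSlope V N where
  norm_le : ‖N‖ ≤ 1
  gap : HasGap V R (comap (1 + N) Γ)
  exists_basis : ∃ c : Basis (Fin (finrank ℝ V)) ℝ V,
    (∀ i, (c i : Euc n) ∈ comap (1 + N) Γ) ∧ ∑ i, ‖c i‖ < R / 4

theorem eventually_exists_pi_mem {ι : Type*} [Finite ι] {x : ι → Euc n} (hx : ∀ i, x i ∈ Γ)
    {p : (ι → Euc n) → Prop} (hp : ∀ᶠ v in 𝓝 x, p v) :
    ∀ᶠ Δ in 𝓝 Γ, ∃ v, (∀ i, v i ∈ Δ) ∧ p v := by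
  rw [nhds_pi] at hp
  obtain ⟨_, -, U, hU, hUp⟩ := Filter.mem_pi.1 hp
  filter_upwards [eventually_all.2 fun i ↦ eventually_exists_mem_nhds (hx i) (hU i)] with Δ hΔ
  choose v hv hvU using hΔ
  exact ⟨v, hv, hUp fun i _ ↦ hvU i⟩

theorem exists_isStraightenedBy (Γ : ChabautyPoint n) :
    ∃ R > 0, ∀ᶠ Δ in 𝓝 Γ, ∃ N, IsStraightenedBy (linearPart Γ) R Δ N := by
  set V := linearPart Γ
  obtain ⟨ρ, hρ, gap⟩ := exists_hasGap_linearPart Γ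
  obtain ⟨b, hb⟩ := exists_basis_sum_norm_lt (V := V) (by positivity : 0 < ρ / 4 / 4)
  have hsum : ∀ᶠ v in 𝓝 fun i ↦ (b i : Euc n), ∑ i, ‖v i‖ < ρ / 4 / 4 :=
    (Continuous.tendsto (by fun_prop) _).eventually_lt_const hb
  refine ⟨ρ / 4, by positivity, ?_⟩
  filter_upwards [eventually_disjoint_nhds isCompact_collar
    (gap.disjoint_collar (R := ρ / 4) (by positivity) (by linarith)),
    eventually_exists_pi_mem (fun i ↦ mem_of_mem_linearPart (b i).2)
      (hsum.and (eventually_exists_slope b))] with Δ hΔ ⟨v, hv, hvρ, N, hN, hN₁, c, hc⟩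
  have hcΔ (i) : (c i : Euc n) ∈ comap (1 + N) Δ := by
    rw [mem_comap, (hc i).2]
    exact hv i
  have hcR : ∑ i, ‖c i‖ < ρ / 4 / 4 := calc
    ∑ i, ‖c i‖ ≤ ∑ i, ‖v i‖ := by
      gcongr with i
      exact (congrArg norm (hc i).1).trans_le (V.norm_starProjection_apply_le _)
    _ < ρ / 4 / 4 := hvρ
  exact ⟨N, hN, hN₁, hasGap_comap_one_add hN hN₁ hcΔ hcR.le hΔ, c, hcΔ, hcR⟩

theorem IsStraightenedBy.apply_eq (h : IsStraightenedBy V R Γ N) {w : Euc n} (hw : w ∈ Γ)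
    (hwR : ‖w‖ < R / 2) : N w = w - V.starProjection w := by
  have hz : (1 - N) w ∈ comap (1 + N) Γ := by
    rwa [mem_comap, ← mul_apply_eq_comp, h.one_add_mul_one_sub]
  have hPz : V.starProjection ((1 - N) w) = V.starProjection w := by
    simp [h.starProjection_apply]
  have hQz : (1 - N) w - V.starProjection ((1 - N) w) = w - V.starProjection w - N w := by
    rw [hPz, sub_apply, one_apply_eq_self, sub_right_comm]
  have hzR : ‖(1 - N) w - V.starProjection ((1 - N) w)‖ < R := calc
    _ ≤ ‖w‖ + 1 * ‖w‖ := hQz ▸ norm_sub_le_of_le (norm_sub_starProjection_le V w)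
      (N.le_of_opNorm_le h.norm_le w)
    _ < R := by linarith
  have := sub_starProjection_eq_zero_iff.2 (h.gap _ hz hzR)
  rw [hQz, sub_eq_zero] at this
  exact this.symm

theorem tendsto_slope_apply {Y : Type*} {l : Filter Y} {f : Y → ChabautyPoint n}
    {M : Y → Euc n →L[ℝ] Euc n} (hf : Tendsto f l (𝓝 Γ)) (hN : IsStraightenedBy V R Γ N)
    (hM : ∀ᶠ y in l, IsStraightenedBy V R (f y) (M y)) {v : Euc n} (hv : v ∈ Γ)
    (hvR : ‖v‖ < R / 2) : Tendsto (fun y ↦ M y v) l (𝓝 (N v)) := by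
  refine Metric.tendsto_nhds.2 fun ε hε ↦ ?_
  have hnear : ∀ᶠ w in 𝓝 v, ‖w - v‖ < ε / 2 ∧ ‖w‖ < R / 2 :=
    (eventually_norm_sub_lt v (by positivity)).and
      (continuous_norm.continuousAt.eventually_lt_const hvR)
  filter_upwards [hM, (tendsto_nhds_iff.1 hf).2 v hv _ hnear] with y hy ⟨w, hw, hwv, hwR⟩
  calc
    dist (M y v) (N v) = ‖(w - v) - V.starProjection (w - v) - M y (w - v)‖ := by
      rw [dist_eq_norm, hN.apply_eq hv hvR, map_sub, map_sub, hy.apply_eq hw hwR]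
      congr 1
      abel
    _ ≤ ‖w - v‖ + 1 * ‖w - v‖ := norm_sub_le_of_le (norm_sub_starProjection_le V _)
      ((M y).le_of_opNorm_le hy.norm_le _)
    _ < ε := by linarith

theorem continuousAt_slope {Y : Type*} [TopologicalSpace Y] {f : Y → ChabautyPoint n}
    {N : Y → Euc n →L[ℝ] Euc n} {y : Y} (hf : ContinuousAt f y)
    (hN : ∀ᶠ z in 𝓝 y, IsStraightenedBy V R (f z) (N z)) : ContinuousAt N y := by
  have hy := hN.self_of_nhds
  obtain ⟨c, hc, hcR⟩ := hy.exists_basis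
  have hshort (i) : ‖(1 + N y) (c i)‖ < R / 2 := by
    have hci : ‖(c i : Euc n)‖ ≤ ∑ i, ‖c i‖ :=
      Finset.single_le_sum (f := fun i ↦ ‖c i‖) (fun i _ ↦ norm_nonneg _) (Finset.mem_univ i)
    have hNci := norm_add_le_of_le hci (((N y).le_of_opNorm_le_of_le hy.norm_le hci))
    rw [add_apply, one_apply_eq_self]
    linarith
  have hbasis (i) : Tendsto (fun z ↦ N z (c i)) (𝓝 y) (𝓝 (N y (c i))) := by
    have hcv : V.starProjection ((1 + N y) (c i)) = c i := by
      rw [hy.starProjection_one_add_apply, Submodule.starProjection_eq_self_iff.2 (c i).2]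
    rw [← hcv, hy.apply_starProjection]
    refine (tendsto_slope_apply hf hy hN (hc i) (hshort i)).congr' ?_
    filter_upwards [hN] with z hz using (hz.apply_starProjection _).symm
  refine continuousAt_clm_apply.2 fun x ↦ ?_
  rw [ContinuousAt, hy.apply_eq_sum c]
  refine (tendsto_finsetSum _ fun i _ ↦ (hbasis i).const_smul _).congr' ?_
  filter_upwards [hN] with z hz using (hz.apply_eq_sum c x).symm

end ChabautyPoint

/-! ### Deforming paths into the discrete groups -/

namespace ChabautyPoint

variable {n : ℕ} {Γ Δ : ChabautyPoint n} {V : Submodule ℝ (Euc n)} {R : ℝ}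

theorem deformsInto_discrete_of_hasGap (hΓ : Γ ∈ discrete n) (hΔ : Δ ∈ discrete n) (hR : 0 < R)
    (p : Path Γ Δ) (gap : ∀ t, HasGap V R (p t))
    (hV : ∀ t, p t ⊓ ofSubmodule V ∈ cocompactIn V) : DeformsInto (discrete n) (mk p) := by
  let F : C(I × I, ChabautyPoint n) :=
    ⟨fun q ↦ expand V (1 - q.1 : ℝ) (p q.2), continuous_iff_continuousAt.2 fun q ↦
      tendsto_expand (p.continuous.comp continuous_snd).continuousAt
        (Continuous.continuousAt (by fun_prop)) hR (.of_forall fun q ↦ gap q.2)⟩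
  have hF₀ (t) : F (0, t) = p t := by simp [F, expand_one]
  have hF₁ (t) : F (1, t) = p t ⊓ ofSubmodule V := by simp [F, expand_zero]
  let q : Path (F (1, 0)) (F (1, 1)) := ⟨F.comp (.prodMk (.const I 1) (.id I)), rfl, rfl⟩
  have h₀ (s) : F (s, 0) ∈ discrete n := expand_mem_discrete (p.source.symm ▸ hΓ) _
  have h₁ (s) : F (s, 1) ∈ discrete n := expand_mem_discrete (p.target.symm ▸ hΔ) _
  exact .of_square F hF₀ (q := q) (fun _ ↦ rfl) h₀ h₁
    (deformsInto_discrete_of_cocompactIn (h₀ 1) (h₁ 1) q fun t ↦ (hF₁ t).symm ▸ hV t)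

theorem IsStraightenedBy.inf_mem_cocompactIn {N : Euc n →L[ℝ] Euc n}
    (h : IsStraightenedBy V R Γ N) : comap (1 + N) Γ ⊓ ofSubmodule V ∈ cocompactIn V := by
  obtain ⟨c, hc, -⟩ := h.exists_basis
  refine le_antisymm (Submodule.span_le.2 fun x hx ↦ hx.2) fun x hx ↦ ?_
  have hsum : ∑ i, c.repr ⟨x, hx⟩ i • (c i : Euc n) = x := by
    simpa only [map_sum, map_smul, Submodule.subtype_apply] using
      congrArg V.subtype (c.sum_repr ⟨x, hx⟩)
  exact hsum ▸ Submodule.sum_mem _ fun i _ ↦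
    Submodule.smul_mem _ _ (Submodule.subset_span ⟨hc i, (c i).2⟩)

theorem deformsInto_discrete_of_isStraightenedBy (hΓ : Γ ∈ discrete n) (hΔ : Δ ∈ discrete n)
    (hR : 0 < R) (p : Path Γ Δ) (h : ∀ t, ∃ N, IsStraightenedBy V R (p t) N) :
    DeformsInto (discrete n) (mk p) := by
  choose N hN using h
  have hNcont : Continuous N := continuous_iff_continuousAt.2 fun t ↦
    continuousAt_slope p.continuous.continuousAt (.of_forall hN)
  have hunit (s t) : IsUnit (1 + (s : ℝ) • N t) := ((hN t).smul s).isUnit_one_add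
  let F : C(I × I, ChabautyPoint n) :=
    ⟨fun q ↦ comap (1 + (q.1 : ℝ) • N q.2) (p q.2), continuous_iff_continuousAt.2 fun q ↦
      tendsto_comap (p.continuous.comp continuous_snd).continuousAt
        (Continuous.continuousAt (by fun_prop)) (hunit _ _)⟩
  have hF₀ (t) : F (0, t) = p t := by simp [F, zero_smul ℝ (N t), comap_one]
  have hF₁ (t) : F (1, t) = comap (1 + N t) (p t) := by simp [F]
  let q : Path (F (1, 0)) (F (1, 1)) := ⟨F.comp (.prodMk (.const I 1) (.id I)), rfl, rfl⟩
  have h₀ (s) : F (s, 0) ∈ discrete n := comap_mem_discrete (p.source.symm ▸ hΓ) (hunit _ _)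
  have h₁ (s) : F (s, 1) ∈ discrete n := comap_mem_discrete (p.target.symm ▸ hΔ) (hunit _ _)
  exact .of_square F hF₀ (q := q) (fun _ ↦ rfl) h₀ h₁ <|
    deformsInto_discrete_of_hasGap (h₀ 1) (h₁ 1) hR q (fun t ↦ (hF₁ t).symm ▸ (hN t).gap)
      fun t ↦ (hF₁ t).symm ▸ (hN t).inf_mem_cocompactIn

theorem exists_eventually_hasGap_bot (hΓ : Γ ∈ discrete n) :
    ∃ R > 0, ∀ᶠ Δ in 𝓝 Γ, HasGap ⊥ R Δ := by
  obtain ⟨R, hR, h⟩ := exists_isStraightenedBy Γ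
  rw [linearPart_eq_bot_of_mem_discrete hΓ] at h
  refine ⟨R, hR, h.mono fun Δ ⟨N, hN⟩ ↦ ?_⟩
  have hN₀ : N = 0 := by simpa using hN.mul_starProjection.symm
  have gap := hN.gap
  rwa [hN₀, add_zero, comap_one] at gap

theorem nullhomotopic_discrete (n : ℕ) :
    (⟨Subtype.val, continuous_subtype_val⟩ : C(discrete n, ChabautyPoint n)).Nullhomotopic := by
  have hcont : Continuous fun q : I × discrete n ↦ expand ⊥ (1 - q.1 : ℝ) q.2.1 := by
    refine continuous_iff_continuousAt.2 fun q ↦ ?_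
    obtain ⟨R, hR, gap⟩ := exists_eventually_hasGap_bot q.2.2
    have hval : Tendsto (fun q : I × discrete n ↦ q.2.1) (𝓝 q) (𝓝 q.2.1) :=
      (continuous_subtype_val.comp continuous_snd).continuousAt
    exact tendsto_expand hval (Continuous.continuousAt (by fun_prop)) hR (hval.eventually gap)
  have hzero (Γ : discrete n) : expand ⊥ 0 Γ.1 = ofSubmodule ⊥ := SetLike.ext fun x ↦ by
    rw [expand_zero, mem_inf, and_iff_right_iff_imp, mem_ofSubmodule, Submodule.mem_bot]
    rintro rfl
    exact ZeroMemClass.zero_mem Γ.1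
  exact ⟨ofSubmodule ⊥, ⟨⟨_, hcont⟩, fun Γ ↦ by simp [expand_one], fun Γ ↦ by simp [hzero]⟩⟩

end ChabautyPoint

/-- The Chabauty space of ℝⁿ is simply connected. -/
theorem chabauty_simply_connected (n : ℕ) (hn : 1 ≤ n) :
    SimplyConnectedSpace (ChabautyPoint n) := by
  have : Nonempty (ChabautyPoint n) := ⟨ChabautyPoint.ofSubmodule ⊥⟩
  refine simplyConnectedSpace_of_nullhomotopic_inclusion (ChabautyPoint.nullhomotopic_discrete n)
    ChabautyPoint.exists_path_enters_discrete fun Γ ↦ ?_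
  obtain ⟨R, hR, hU⟩ := ChabautyPoint.exists_isStraightenedBy Γ
  exact ⟨_, hU, fun p ha hb hp ↦
    ChabautyPoint.deformsInto_discrete_of_isStraightenedBy ha hb hR p hp⟩
end
end
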